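/- arXiv:2504.13430 — 6 statements merged into one kernel-verified Lean document; each statement's English description precedes it below -/
import Mathlib

section
/- Let n ≥ 1, let p < 0, let U*_a > 0 for each a ∈ Fin n, and let W = ((1/n) ∑_a (U*_a)^p)^{1/p}. Set Φ = √(n · log(n+1)) and β* = (1/2) · n^{−1/2 − 1/(2|p|)} · (log(n+1))^{−1/2 + 1/(2|p|)}. Then (2β* · log(n+1))^{|p|/(|p|+1)} = (2Φβ*)^{|p|} = √(log(n+1)/n); consequently, for any C ⊆ Fin n and reals R_a with 0 ≤ R_a ≤ β*·W for a ∈ C satisfying (1/n) ∑_{a∈C} U*_a ≤ β* · log(n+1) · W + (Φ/n) ∑_{a∈C} R_a, one has |C| ≤ √(n · log(n+1)). -/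
open Real

/-!
Let `q = |p|`, `L = log (n + 1)` and `x = |C| / n`. The sum of `U ^ p` over `C` is at most the full
sum `n W ^ p`, so Hölder's inequality for `1 = U · U⁻¹` on `C` shows that `(1 / n) ∑_{a ∈ C} U_a` is
at least `x ^ (1 + 1/q) W`. The hypothesis on `C`, together with `R_a ≤ β W`, then gives
`x ^ (1 + 1/q) ≤ (2 β L + 2 Φ β x) / 2`. One of `2 β L` and `2 Φ β x` is at least the left side,
so `x ≤ max ((2 β L) ^ (q / (q + 1))) ((2 Φ β) ^ q)`. The value `β*` is the one at which the two
bounds coincide; both are then `√(L / n)`.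
-/

lemma card_rpow_le_sum_rpow_mul_sum_rpow_neg {ι : Type*} (s : Finset ι) {u : ι → ℝ} {q : ℝ}
    (hq : 0 ≤ q) (hu : ∀ a ∈ s, 0 < u a) :
    (s.card : ℝ) ^ (q + 1) ≤ (∑ a ∈ s, u a) ^ q * ∑ a ∈ s, u a ^ (-q) := by
  have hcard : (s.card : ℝ) ≤
      (∑ a ∈ s, u a) ^ (1 - (q + 1)⁻¹) * (∑ a ∈ s, u a ^ (-q)) ^ (q + 1)⁻¹ := by
    have hholder := inner_le_weight_mul_Lp_of_nonneg s (p := q + 1) (by linarith)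
      (fun a ↦ |u a|) (fun a ↦ |u a|⁻¹) (fun a ↦ abs_nonneg _) (fun a ↦ by positivity)
    have hone : ∑ a ∈ s, |u a| * |u a|⁻¹ = s.card := by
      rw [Finset.sum_congr rfl fun a ha ↦ mul_inv_cancel₀ (abs_ne_zero.mpr (hu a ha).ne')]
      simp only [Finset.sum_const, nsmul_eq_mul, mul_one]
    have hneg : ∑ a ∈ s, |u a| * |u a|⁻¹ ^ (q + 1) = ∑ a ∈ s, u a ^ (-q) := by
      refine Finset.sum_congr rfl fun a ha ↦ ?_
      have hua := hu a ha
      rw [abs_of_pos hua, inv_rpow hua.le, rpow_add_one hua.ne', rpow_neg hua.le]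
      field_simp
    rwa [hone, hneg, Finset.sum_congr rfl fun a ha ↦ abs_of_pos (hu a ha)] at hholder
  have hsum : 0 ≤ ∑ a ∈ s, u a := Finset.sum_nonneg fun a ha ↦ (hu a ha).le
  have hsum_neg : 0 ≤ ∑ a ∈ s, u a ^ (-q) :=
    Finset.sum_nonneg fun a ha ↦ rpow_nonneg (hu a ha).le _
  have hexp : (1 - (q + 1)⁻¹) * (q + 1) = q := by
    field_simp
    ring
  calc (s.card : ℝ) ^ (q + 1)
      ≤ ((∑ a ∈ s, u a) ^ (1 - (q + 1)⁻¹) * (∑ a ∈ s, u a ^ (-q)) ^ (q + 1)⁻¹) ^ (q + 1) := by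
        gcongr
    _ = (∑ a ∈ s, u a) ^ q * ∑ a ∈ s, u a ^ (-q) := by
        rw [mul_rpow (by positivity) (by positivity), ← rpow_mul hsum, hexp,
          rpow_inv_rpow hsum_neg (by positivity)]

lemma le_max_rpow_of_rpow_le_add_mul_half {q b c x : ℝ} (hq : 0 < q) (hb : 0 ≤ b) (hc : 0 ≤ c)
    (hx : 0 ≤ x) (h : x ^ (1 + 1 / q) ≤ (b + c * x) / 2) :
    x ≤ max (b ^ (q / (q + 1))) (c ^ q) := by
  by_contra! hlt
  obtain ⟨hbx, hcx⟩ := max_lt_iff.mp hlt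
  have hx_pos : 0 < x := (rpow_nonneg hc q).trans_lt hcx
  have hexp : (1 + 1 / q)⁻¹ = q / (q + 1) := by field_simp
  have hfirst : b < x ^ (1 + 1 / q) := by
    rwa [← rpow_inv_lt_iff_of_pos hb hx (by positivity), hexp]
  have hsecond : c * x < x ^ (1 + 1 / q) := by
    rw [add_comm, rpow_add_one hx_pos.ne', one_div]
    gcongr
    exact (lt_rpow_inv_iff_of_pos hc hx hq).mpr hcx
  linarith

section PowerMean

variable {ι : Type*} [Fintype ι]

/-- The `p`-mean of a finite family of positive reals (for `p ≠ 0`). -/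
noncomputable def powerMean (p : ℝ) (u : ι → ℝ) : ℝ :=
  (1 / (Fintype.card ι : ℝ) * ∑ a, u a ^ p) ^ (1 / p)

variable {p : ℝ} {u : ι → ℝ}

lemma powerMean_pos [Nonempty ι] (hu : ∀ a, 0 < u a) : 0 < powerMean p u := by
  have : 0 < ∑ a, u a ^ p :=
    Finset.sum_pos (fun a _ ↦ rpow_pos_of_pos (hu a) p) Finset.univ_nonempty
  unfold powerMean
  positivity

lemma powerMean_rpow (hp : p ≠ 0) (hu : ∀ a, 0 ≤ u a) :
    powerMean p u ^ p = 1 / (Fintype.card ι : ℝ) * ∑ a, u a ^ p := by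
  have : 0 ≤ ∑ a, u a ^ p := Finset.sum_nonneg fun a _ ↦ rpow_nonneg (hu a) p
  rw [powerMean, one_div p, rpow_inv_rpow (by positivity) hp]

lemma card_rpow_le_sum_rpow_mul_powerMean_rpow [Nonempty ι] (s : Finset ι) (hp : p < 0)
    (hu : ∀ a, 0 < u a) :
    (s.card : ℝ) ^ (|p| + 1) ≤ (∑ a ∈ s, u a) ^ |p| * (Fintype.card ι * powerMean p u ^ p) := by
  have hA : 0 ≤ ∑ a ∈ s, u a := Finset.sum_nonneg fun a _ ↦ (hu a).le
  calc (s.card : ℝ) ^ (|p| + 1)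
      ≤ (∑ a ∈ s, u a) ^ |p| * ∑ a ∈ s, u a ^ p := by
        simpa only [abs_of_neg hp, neg_neg] using
          card_rpow_le_sum_rpow_mul_sum_rpow_neg s (abs_nonneg p) fun a _ ↦ hu a
    _ ≤ (∑ a ∈ s, u a) ^ |p| * ∑ a, u a ^ p := by
        gcongr
        · exact fun a _ _ ↦ rpow_nonneg (hu a).le p
        · exact Finset.subset_univ s
    _ = (∑ a ∈ s, u a) ^ |p| * (Fintype.card ι * powerMean p u ^ p) := by
        rw [powerMean_rpow hp.ne fun a ↦ (hu a).le]
        field_simp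

lemma card_div_rpow_mul_powerMean_le [Nonempty ι] (s : Finset ι) (hp : p < 0)
    (hu : ∀ a, 0 < u a) :
    ((s.card : ℝ) / Fintype.card ι) ^ (1 + 1 / |p|) * powerMean p u ≤
      1 / (Fintype.card ι : ℝ) * ∑ a ∈ s, u a := by
  have hq : 0 < |p| := abs_pos.mpr hp.ne
  have hexp : (1 + 1 / |p|) * |p| = |p| + 1 := by
    field_simp
  have hN : (0 : ℝ) < Fintype.card ι := by exact_mod_cast Fintype.card_pos
  have hW := powerMean_pos (p := p) hu
  have hA : 0 ≤ ∑ a ∈ s, u a := Finset.sum_nonneg fun a _ ↦ (hu a).le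
  have hWp : powerMean p u ^ p * powerMean p u ^ |p| = 1 := by
    rw [← rpow_add hW, abs_of_neg hp, add_neg_cancel, rpow_zero]
  rw [← rpow_le_rpow_iff (by positivity) (by positivity) hq]
  calc (((s.card : ℝ) / Fintype.card ι) ^ (1 + 1 / |p|) * powerMean p u) ^ |p|
      = (s.card : ℝ) ^ (|p| + 1) / (Fintype.card ι : ℝ) ^ (|p| + 1) * powerMean p u ^ |p| := by
        rw [mul_rpow (by positivity) hW.le, ← rpow_mul (by positivity), hexp,
          div_rpow (by positivity) hN.le]
    _ ≤ (∑ a ∈ s, u a) ^ |p| * (Fintype.card ι * powerMean p u ^ p) /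
          (Fintype.card ι : ℝ) ^ (|p| + 1) * powerMean p u ^ |p| := by
        gcongr
        exact card_rpow_le_sum_rpow_mul_powerMean_rpow s hp hu
    _ = (∑ a ∈ s, u a) ^ |p| / (Fintype.card ι : ℝ) ^ |p| := by
        rw [rpow_add_one hN.ne']
        field_simp
        linear_combination (∑ a ∈ s, u a) ^ |p| * hWp
    _ = (1 / (Fintype.card ι : ℝ) * ∑ a ∈ s, u a) ^ |p| := by
        rw [← div_rpow hA hN.le, one_div_mul_eq_div]

lemma card_div_le_max_of_sum_le [Nonempty ι] {β L Φ : ℝ} (hp : p < 0) (hu : ∀ a, 0 < u a)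
    (hβ : 0 ≤ β) (hL : 0 ≤ L) (hΦ : 0 ≤ Φ) {C : Finset ι} {R : ι → ℝ}
    (hR : ∀ a ∈ C, R a ≤ β * powerMean p u)
    (h : 1 / (Fintype.card ι : ℝ) * ∑ a ∈ C, u a ≤
      β * L * powerMean p u + Φ / Fintype.card ι * ∑ a ∈ C, R a) :
    (C.card : ℝ) / Fintype.card ι ≤
      max ((2 * β * L) ^ (|p| / (|p| + 1))) ((2 * Φ * β) ^ |p|) := by
  refine le_max_rpow_of_rpow_le_add_mul_half (abs_pos.mpr hp.ne) (by positivity) (by positivity)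
    (by positivity) (le_of_mul_le_mul_right ?_ (powerMean_pos (p := p) hu))
  have hsumR : ∑ a ∈ C, R a ≤ C.card * (β * powerMean p u) := by
    simpa only [nsmul_eq_mul] using Finset.sum_le_card_nsmul C R _ hR
  calc ((C.card : ℝ) / Fintype.card ι) ^ (1 + 1 / |p|) * powerMean p u
      ≤ 1 / (Fintype.card ι : ℝ) * ∑ a ∈ C, u a := card_div_rpow_mul_powerMean_le C hp hu
    _ ≤ β * L * powerMean p u + Φ / Fintype.card ι * ∑ a ∈ C, R a := h
    _ ≤ β * L * powerMean p u + Φ / Fintype.card ι * (C.card * (β * powerMean p u)) := by gcongr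
    _ = (2 * β * L + 2 * Φ * β * (C.card / Fintype.card ι)) / 2 * powerMean p u := by ring

end PowerMean

section BalancedRadius

/-- The value `β*` of `β` at which the bounds `(2 β L) ^ (q / (q + 1))` and `(2 √(N L) β) ^ q`
coincide. In the application `q = |p|`, and `β*` times the `p`-mean bounds each `R a`. -/
noncomputable def balancedRadius (q N L : ℝ) : ℝ :=
  1 / 2 * N ^ (-(1 / 2 : ℝ) - 1 / (2 * q)) * L ^ (-(1 / 2 : ℝ) + 1 / (2 * q))

variable {q N L : ℝ}

lemma balancedRadius_nonneg (hN : 0 ≤ N) (hL : 0 ≤ L) : 0 ≤ balancedRadius q N L := by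
  unfold balancedRadius
  positivity

lemma two_mul_balancedRadius_mul (hN : 0 < N) (hL : 0 < L) :
    2 * balancedRadius q N L * L = (L / N) ^ (1 / 2 + 1 / (2 * q)) := by
  calc 2 * balancedRadius q N L * L
      = N ^ (-(1 / 2 + 1 / (2 * q))) * L ^ (-(1 / 2) + 1 / (2 * q) + 1) := by
        rw [balancedRadius, rpow_add_one hL.ne', neg_add']
        ring
    _ = (L / N) ^ (1 / 2 + 1 / (2 * q)) := by
        have hexp : -(1 / 2) + 1 / (2 * q) + 1 = 1 / 2 + 1 / (2 * q) := by ring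
        rw [div_rpow hL.le hN.le, rpow_neg hN.le, hexp, inv_mul_eq_div]

lemma two_mul_sqrt_mul_balancedRadius (hN : 0 < N) (hL : 0 < L) :
    2 * √(N * L) * balancedRadius q N L = (L / N) ^ (1 / (2 * q)) := by
  calc 2 * √(N * L) * balancedRadius q N L
      = N ^ (1 / 2 + (-(1 / 2) - 1 / (2 * q))) * L ^ (1 / 2 + (-(1 / 2) + 1 / (2 * q))) := by
        rw [balancedRadius, sqrt_eq_rpow, mul_rpow hN.le hL.le, rpow_add hN,
          rpow_add hL (1 / 2)]
        ring
    _ = (L / N) ^ (1 / (2 * q)) := by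
        rw [div_rpow hL.le hN.le, add_neg_cancel_left, ← add_sub_assoc, add_neg_cancel, zero_sub,
          rpow_neg hN.le, inv_mul_eq_div]

lemma two_mul_balancedRadius_mul_rpow (hq : 0 < q) (hN : 0 < N) (hL : 0 < L) :
    (2 * balancedRadius q N L * L) ^ (q / (q + 1)) = √(L / N) := by
  have hexp : (1 / 2 + 1 / (2 * q)) * (q / (q + 1)) = 1 / 2 := by field_simp
  rw [two_mul_balancedRadius_mul hN hL, ← rpow_mul (by positivity), hexp, sqrt_eq_rpow]

lemma two_mul_sqrt_mul_balancedRadius_rpow (hq : 0 < q) (hN : 0 < N) (hL : 0 < L) :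
    (2 * √(N * L) * balancedRadius q N L) ^ q = √(L / N) := by
  have hexp : 1 / (2 * q) * q = 1 / 2 := by field_simp
  rw [two_mul_sqrt_mul_balancedRadius hN hL, ← rpow_mul (by positivity), hexp, sqrt_eq_rpow]

end BalancedRadius

theorem stmt_9_general {ι : Type*} [Fintype ι] [Nonempty ι] {p L : ℝ} {u : ι → ℝ} (hp : p < 0)
    (hu : ∀ a, 0 < u a) (hL : 0 < L) :
    letI N : ℝ := Fintype.card ι
    letI Φ := √(N * L)
    letI β := balancedRadius |p| N L
    (2 * β * L) ^ (|p| / (|p| + 1)) = √(L / N) ∧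
    (2 * Φ * β) ^ |p| = √(L / N) ∧
    ∀ (C : Finset ι) (R : ι → ℝ), (∀ a ∈ C, R a ≤ β * powerMean p u) →
      1 / N * ∑ a ∈ C, u a ≤ β * L * powerMean p u + Φ / N * ∑ a ∈ C, R a →
      C.card ≤ √(N * L) := by
  have hq : 0 < |p| := abs_pos.mpr hp.ne
  have hN : (0 : ℝ) < Fintype.card ι := by exact_mod_cast Fintype.card_pos
  have hfirst := two_mul_balancedRadius_mul_rpow hq hN hL
  have hsecond := two_mul_sqrt_mul_balancedRadius_rpow hq hN hL
  refine ⟨hfirst, hsecond, fun C R hR h ↦ ?_⟩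
  have hmax := card_div_le_max_of_sum_le hp hu (balancedRadius_nonneg hN.le hL.le) hL.le
    (sqrt_nonneg _) hR h
  rw [hfirst, hsecond, max_self, div_le_iff₀ hN] at hmax
  calc (C.card : ℝ) ≤ √(L / Fintype.card ι) * Fintype.card ι := hmax
    _ = √(Fintype.card ι * L) := by
      rw [sqrt_div hL.le, div_mul_eq_mul_div, mul_div_assoc, div_sqrt, mul_comm, sqrt_mul hN.le]

theorem stmt_9
    (n : ℕ) (hn : 1 ≤ n)
    (p : ℝ) (hp : p < 0)
    (Ustar : Fin n → ℝ) (hUstar_pos : ∀ a, 0 < Ustar a)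
    (W : ℝ) (hW : W = ((1 / (n : ℝ)) * ∑ a, (Ustar a) ^ p) ^ (1 / p))
    (Φ : ℝ) (hΦ : Φ = Real.sqrt ((n : ℝ) * Real.log ((n : ℝ) + 1)))
    (βstar : ℝ)
    (hβstar : βstar = (1 / 2) * (n : ℝ) ^ (-(1 / 2 : ℝ) - 1 / (2 * |p|)) *
      (Real.log ((n : ℝ) + 1)) ^ (-(1 / 2 : ℝ) + 1 / (2 * |p|))) :
    (2 * βstar * Real.log ((n : ℝ) + 1)) ^ (|p| / (|p| + 1)) =
        Real.sqrt (Real.log ((n : ℝ) + 1) / (n : ℝ)) ∧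
    (2 * Φ * βstar) ^ |p| = Real.sqrt (Real.log ((n : ℝ) + 1) / (n : ℝ)) ∧
    ∀ C : Finset (Fin n), ∀ R : Fin n → ℝ,
      (∀ a ∈ C, 0 ≤ R a ∧ R a ≤ βstar * W) →
      (1 / (n : ℝ)) * ∑ a ∈ C, Ustar a ≤
        βstar * Real.log ((n : ℝ) + 1) * W + (Φ / (n : ℝ)) * ∑ a ∈ C, R a →
      (C.card : ℝ) ≤ Real.sqrt ((n : ℝ) * Real.log ((n : ℝ) + 1)) := by
  subst hW hΦ hβstar
  have : Nonempty (Fin n) := ⟨⟨0, hn⟩⟩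
  have hL : 0 < log ((n : ℝ) + 1) := log_pos (by norm_cast; lia)
  have hgen := stmt_9_general hp hUstar_pos hL
  simp only [powerMean, balancedRadius, Fintype.card_fin] at hgen
  exact ⟨hgen.1, hgen.2.1, fun C R hR ↦ hgen.2.2 C R fun a ha ↦ (hR a ha).2⟩
end

section
/- In the Mixed Greedy model with unit monopolist utilities, let n ≥ 2, let p ≤ −1 be a real, let β* = (1/2) · n^{−1/2 − 1/(2|p|)} · (log(n+1))^{−1/2 + 1/(2|p|)}, and let W ∈ (0, 1] be a real. Suppose the egalitarian copy x^E satisfies the regularized egalitarian greedy condition, and suppose that for every t ∈ [0,T] the number of agents a with U a t + R a t ≤ β*·W is at most √(n · log(n+1)). Then U a t + R a t ≥ β*·W for every agent a and every t ∈ [0,T]; in particular U a T ≥ β*·W for every agent a. -/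
open MeasureTheory Real

/-!
Write `F a = U a + R a`. Each `F a` is absolutely continuous with derivative
`v a * (xN a + xE a - 1/Φ)` almost everywhere, hence so is the minimum of all the `F a` and of the
constant target. At almost every time this minimum has the same derivative as each function
attaining it. If it lies below the target, then the greedy rule spends the whole egalitarian unit on
minimisers. These agents lie below the target, so there are at most `Φ` of them, and one of them
receives a share of at least `1/Φ`; its `F a` has nonnegative derivative. So the minimum is
nondecreasing, and it starts at the target.
-/

section Calculus

open Set Topology

variable {a b : ℝ}

lemma absolutelyContinuousOnInterval_const {X : Type*} [PseudoMetricSpace X] (c : X) :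
    AbsolutelyContinuousOnInterval (fun _ : ℝ => c) a b := by
  simpa [AbsolutelyContinuousOnInterval] using tendsto_const_nhds

lemma absolutelyContinuousOnInterval_inf {E : Type*} [NormedAddCommGroup E] [Lattice E]
    [HasSolidNorm E] [IsOrderedAddMonoid E] {f g : ℝ → E}
    (hf : AbsolutelyContinuousOnInterval f a b) (hg : AbsolutelyContinuousOnInterval g a b) :
    AbsolutelyContinuousOnInterval (fun t => f t ⊓ g t) a b := by
  refine squeeze_zero (fun I => Finset.sum_nonneg fun _ _ => dist_nonneg) (fun I => ?_)
    (by simpa using Filter.Tendsto.add hf hg)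
  rw [← Finset.sum_add_distrib]
  gcongr
  simpa only [dist_eq_norm] using norm_inf_sub_inf_le_add_norm _ _ _ _

lemma absolutelyContinuousOnInterval_finset_inf' {ι E : Type*} [NormedAddCommGroup E] [Lattice E]
    [HasSolidNorm E] [IsOrderedAddMonoid E] {s : Finset ι} (hs : s.Nonempty) {F : ι → ℝ → E}
    (hF : ∀ i ∈ s, AbsolutelyContinuousOnInterval (F i) a b) :
    AbsolutelyContinuousOnInterval (fun t => s.inf' hs (F · t)) a b := by
  induction hs using Finset.Nonempty.cons_induction with
  | singleton i => simpa only [Finset.inf'_singleton] using hF i (Finset.mem_singleton_self i)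
  | cons i s hi hs ih =>
    simp only [Finset.forall_mem_cons] at hF
    simpa only [Finset.inf'_cons hs] using absolutelyContinuousOnInterval_inf hF.1 (ih hF.2)

lemma monotoneOn_of_ae_deriv_nonneg {g : ℝ → ℝ} (hg : AbsolutelyContinuousOnInterval g a b)
    (hderiv : ∀ᵐ t ∂volume.restrict (Icc a b), 0 ≤ deriv g t) : MonotoneOn g (Icc a b) := by
  intro x hx y hy hxy
  have hsub : Icc x y ⊆ Icc a b := Icc_subset_Icc hx.1 hy.2
  have hftc : ∫ t in x..y, deriv g t = g y - g x :=
    (hg.mono (uIcc_subset_uIcc (Icc_subset_uIcc hx) (Icc_subset_uIcc hy))).integral_deriv_eq_sub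
  have hnonneg : 0 ≤ ∫ t in x..y, deriv g t :=
    intervalIntegral.integral_nonneg_of_ae_restrict hxy
      (ae_restrict_of_ae_restrict_of_subset hsub hderiv)
  linarith

lemma deriv_eq_deriv_of_eventually_le_of_eq {f g : ℝ → ℝ} {t : ℝ} (hle : g ≤ᶠ[𝓝 t] f)
    (heq : g t = f t) (hg : DifferentiableAt ℝ g t) (hf : DifferentiableAt ℝ f t) :
    deriv g t = deriv f t := by
  have hmin : IsLocalMin (f - g) t := hle.mono fun u hu => by simpa [heq] using hu
  have hzero := hmin.deriv_eq_zero
  rw [deriv_sub hf hg] at hzero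
  linarith

lemma monotoneOn_finset_inf'_of_ae_exists_minimizer_deriv_nonneg {ι : Type*} {s : Finset ι}
    (hs : s.Nonempty) {F : ι → ℝ → ℝ} (hF : ∀ i ∈ s, AbsolutelyContinuousOnInterval (F i) a b)
    (hmin : ∀ᵐ t ∂volume.restrict (Icc a b),
      ∃ i ∈ s, (∀ j ∈ s, F i t ≤ F j t) ∧ 0 ≤ deriv (F i) t) :
    MonotoneOn (fun t => s.inf' hs (F · t)) (Icc a b) := by
  have hinf := absolutelyContinuousOnInterval_finset_inf' hs hF
  refine monotoneOn_of_ae_deriv_nonneg hinf ?_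
  have hFdiff : ∀ᵐ t, ∀ i ∈ s, t ∈ uIcc a b → DifferentiableAt ℝ (F i) t :=
    (ae_ball_iff s.countable_toSet).2 fun i hi => (hF i hi).ae_differentiableAt
  filter_upwards [hmin, ae_restrict_of_ae hinf.ae_differentiableAt, ae_restrict_of_ae hFdiff,
    ae_restrict_mem measurableSet_Icc] with t ⟨i, hi, hile, hideriv⟩ hinfdiff hFdiff ht
  have htouch : s.inf' hs (F · t) = F i t :=
    le_antisymm (Finset.inf'_le _ hi) (Finset.le_inf' _ _ hile)
  rwa [deriv_eq_deriv_of_eventually_le_of_eq (.of_forall fun u => Finset.inf'_le (F · u) hi) htouch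
    (hinfdiff (Icc_subset_uIcc ht)) (hFdiff i hi (Icc_subset_uIcc ht))]

lemma le_of_ae_exists_minimizer_deriv_nonneg {ι : Type*} [Finite ι] {F : ι → ℝ → ℝ} {β : ℝ}
    (hF : ∀ i, AbsolutelyContinuousOnInterval (F i) a b) (hinit : ∀ i, β ≤ F i a)
    (hmin : ∀ᵐ t ∂volume.restrict (Icc a b),
      (∃ j, F j t < β) → ∃ i, (∀ j, F i t ≤ F j t) ∧ 0 ≤ deriv (F i) t)
    (i : ι) {t : ℝ} (ht : t ∈ Icc a b) : β ≤ F i t := by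
  cases nonempty_fintype ι
  -- `none` indexes the constant `β`, which truncates the minimum at that level.
  let G : Option ι → ℝ → ℝ := fun o => o.elim (fun _ => β) F
  have hG : ∀ o ∈ Finset.univ, AbsolutelyContinuousOnInterval (G o) a b
    | none, _ => absolutelyContinuousOnInterval_const β
    | some j, _ => hF j
  have hGmin : ∀ᵐ t ∂volume.restrict (Icc a b),
      ∃ o ∈ Finset.univ, (∀ q ∈ Finset.univ, G o t ≤ G q t) ∧ 0 ≤ deriv (G o) t := by
    filter_upwards [hmin] with t hmin
    by_cases hbelow : ∃ j, F j t < β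
    · obtain ⟨j, hj⟩ := hbelow
      obtain ⟨i, hile, hideriv⟩ := hmin ⟨j, hj⟩
      exact ⟨some i, Finset.mem_univ _,
        fun q _ => q.casesOn ((hile j).trans hj.le) hile, hideriv⟩
    · push Not at hbelow
      exact ⟨none, Finset.mem_univ _, fun q _ => q.casesOn le_rfl hbelow, (deriv_const t β).ge⟩
  calc β ≤ Finset.univ.inf' Finset.univ_nonempty (G · a) :=
        Finset.le_inf' _ _ fun o _ => o.casesOn le_rfl hinit
    _ ≤ Finset.univ.inf' Finset.univ_nonempty (G · t) :=
        monotoneOn_finset_inf'_of_ae_exists_minimizer_deriv_nonneg _ hG hGmin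
          (left_mem_Icc.2 (ht.1.trans ht.2)) ht ht.1
    _ ≤ F i t := Finset.inf'_le (G · t) (Finset.mem_univ (some i))

lemma le_add_integral_of_ae_exists_minimizer_nonneg {ι : Type*} [Finite ι] {f : ι → ℝ → ℝ}
    {c : ι → ℝ} {β : ℝ} (hf : ∀ i, IntervalIntegrable (f i) volume a b) (hinit : ∀ i, β ≤ c i)
    (hmin : ∀ᵐ t ∂volume.restrict (Icc a b), (∃ j, c j + ∫ u in a..t, f j u < β) →
      ∃ i, (∀ j, c i + ∫ u in a..t, f i u ≤ c j + ∫ u in a..t, f j u) ∧ 0 ≤ f i t)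
    (i : ι) {t : ℝ} (ht : t ∈ Icc a b) : β ≤ c i + ∫ u in a..t, f i u := by
  refine le_of_ae_exists_minimizer_deriv_nonneg (F := fun i t => c i + ∫ u in a..t, f i u)
    (fun i => (absolutelyContinuousOnInterval_const _).fun_add
      ((hf i).absolutelyContinuousOnInterval_intervalIntegral left_mem_uIcc))
    (fun i => by simpa using hinit i) ?_ i ht
  filter_upwards [hmin, ae_restrict_of_ae (ae_all_iff.2 fun i => (hf i).ae_hasDerivAt_integral),
    ae_restrict_mem measurableSet_Icc] with t hmin hderiv ht hbelow
  obtain ⟨i, hile, hipos⟩ := hmin hbelow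
  have hi := (hderiv i (Icc_subset_uIcc ht) a left_mem_uIcc).const_add (c i)
  exact ⟨i, hile, by rwa [hi.deriv]⟩

end Calculus

lemma exists_sum_div_le_of_ncard_pos_le {ι K : Type*} [Fintype ι] [Field K] [LinearOrder K]
    [IsStrictOrderedRing K] {x : ι → K} {k : K} (hsum : 0 < ∑ i, x i)
    (hcard : ({i | 0 < x i}.ncard : K) ≤ k) : ∃ i, 0 < x i ∧ (∑ j, x j) / k ≤ x i := by
  classical
  set S : Finset ι := {i | 0 < x i} with hS
  have hSsum : ∑ i, x i ≤ ∑ i ∈ S, x i := by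
    rw [← Finset.sum_filter_add_sum_filter_not Finset.univ (0 < x ·)]
    exact add_le_of_nonpos_right (Finset.sum_nonpos fun i hi => not_lt.1 (Finset.mem_filter.1 hi).2)
  have hSne : S.Nonempty := Finset.nonempty_of_sum_ne_zero (hsum.trans_le hSsum).ne'
  have hScard : (S.card : K) ≤ k := by
    rwa [← Set.ncard_coe_finset, hS, Finset.coe_filter_univ]
  have hk : 0 < k := (Nat.cast_pos.2 hSne.card_pos).trans_le hScard
  have hle : ∑ _i ∈ S, (∑ j, x j) / k ≤ ∑ i ∈ S, x i := by
    refine le_trans ?_ hSsum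
    rw [Finset.sum_const, nsmul_eq_mul, mul_div_left_comm]
    exact mul_le_of_le_one_right hsum.le ((div_le_one hk).2 hScard)
  obtain ⟨i, hi, hxi⟩ := Finset.exists_le_of_sum_le hSne hle
  exact ⟨i, (Finset.mem_filter.1 hi).2, hxi⟩

lemma rpow_mul_rpow_le_one_div_sqrt_mul {x y q : ℝ} (hy : 0 < y) (hyx : y ≤ x) (hq : 0 ≤ q) :
    x ^ (-(1 / 2 : ℝ) - q) * y ^ (-(1 / 2 : ℝ) + q) ≤ 1 / √(x * y) := by
  have hx : 0 < x := hy.trans_le hyx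
  have hratio : (y / x) ^ q ≤ 1 := rpow_le_one (by positivity) ((div_le_one hx).2 hyx) hq
  calc x ^ (-(1 / 2 : ℝ) - q) * y ^ (-(1 / 2 : ℝ) + q)
      = (x * y) ^ (-(1 / 2 : ℝ)) * (y / x) ^ q := by
        rw [rpow_sub hx, rpow_add hy, mul_rpow hx.le hy.le, div_rpow hy.le hx.le]
        ring
    _ ≤ (x * y) ^ (-(1 / 2 : ℝ)) := mul_le_of_le_one_right (by positivity) hratio
    _ = 1 / √(x * y) := by
        rw [rpow_neg (by positivity), ← sqrt_eq_rpow, one_div √_]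

lemma half_mul_rpow_mul_log_rpow_mul_le {x q W : ℝ} (hx : 0 < x) (hq : 0 ≤ q) (hW : W ≤ 1) :
    1 / 2 * x ^ (-(1 / 2 : ℝ) - q) * log (x + 1) ^ (-(1 / 2 : ℝ) + q) * W ≤
      1 / √(x * log (x + 1)) := by
  have hlog : 0 < log (x + 1) := log_pos (by linarith)
  have hlog_le : log (x + 1) ≤ x := by linarith [log_le_sub_one_of_pos (by linarith : 0 < x + 1)]
  calc 1 / 2 * x ^ (-(1 / 2 : ℝ) - q) * log (x + 1) ^ (-(1 / 2 : ℝ) + q) * W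
      = x ^ (-(1 / 2 : ℝ) - q) * log (x + 1) ^ (-(1 / 2 : ℝ) + q) * (W / 2) := by ring
    _ ≤ x ^ (-(1 / 2 : ℝ) - q) * log (x + 1) ^ (-(1 / 2 : ℝ) + q) :=
        mul_le_of_le_one_right (by positivity) (by linarith)
    _ ≤ 1 / √(x * log (x + 1)) := rpow_mul_rpow_le_one_div_sqrt_mul hlog hlog_le hq

lemma intervalIntegrable_mul_of_ae_mem_Icc {a b m M : ℝ} {f g : ℝ → ℝ} (hab : a ≤ b)
    (hf : IntegrableOn f (Set.Icc a b))
    (hg : AEStronglyMeasurable g (volume.restrict (Set.Icc a b)))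
    (hbound : ∀ᵐ s ∂volume.restrict (Set.Icc a b), g s ∈ Set.Icc m M) :
    IntervalIntegrable (fun s => f s * g s) volume a b := by
  refine (intervalIntegrable_iff_integrableOn_Icc_of_le hab).2 ?_
  refine Integrable.mul_bdd (c := max |m| |M|) hf hg ?_
  filter_upwards [hbound] with s hs
  exact abs_le_max_abs_abs hs.1 hs.2

lemma integral_mul_add_mul_sub_integral {a b C K : ℝ} {v x : ℝ → ℝ}
    (hv : IntervalIntegrable v volume a b)
    (hvx : IntervalIntegrable (fun s => v s * x s) volume a b) :
    (∫ s in a..b, v s * x s) + C * (K - ∫ s in a..b, v s) =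
      C * K + ∫ s in a..b, v s * (x s - C) := by
  simp only [mul_sub]
  rw [intervalIntegral.integral_sub hvx (hv.mul_const C), intervalIntegral.integral_mul_const]
  ring

lemma exists_minimizer_one_div_le_of_greedy {ι K α : Type*} [Fintype ι] [Field K] [LinearOrder K]
    [IsStrictOrderedRing K] [Preorder α] {F : ι → α} {x : ι → K} {β : α} {k : K}
    (hsum : ∑ i, x i = 1) (hgreedy : ∀ i, 0 < x i → ∀ j, F i ≤ F j)
    (hcount : ({i | F i ≤ β}.ncard : K) ≤ k) (hbelow : ∃ j, F j ≤ β) :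
    ∃ i, (∀ j, F i ≤ F j) ∧ 1 / k ≤ x i := by
  obtain ⟨j, hj⟩ := hbelow
  have hsupport : {i | 0 < x i} ⊆ {i | F i ≤ β} := fun i hi => (hgreedy i hi j).trans hj
  have hcard : ({i | 0 < x i}.ncard : K) ≤ k :=
    (Nat.cast_le.2 (Set.ncard_le_ncard hsupport)).trans hcount
  obtain ⟨i, hi, hshare⟩ := exists_sum_div_le_of_ncard_pos_le (hsum ▸ one_pos) hcard
  exact ⟨i, hgreedy i hi, hsum ▸ hshare⟩

theorem stmt_10_general {ι : Type*} [Fintype ι] {T u₀ Φ β : ℝ} (hT : 0 ≤ T) {v xN xE : ι → ℝ → ℝ}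
    (hv_nonneg : ∀ a, ∀ᵐ s ∂volume.restrict (Set.Icc 0 T), 0 ≤ v a s)
    (hv_int : ∀ a, IntegrableOn (v a) (Set.Icc 0 T))
    (hxN_meas : ∀ a, Measurable (xN a)) (hxE_meas : ∀ a, Measurable (xE a))
    (hxN : ∀ᵐ s ∂volume.restrict (Set.Icc 0 T), (fun a => xN a s) ∈ stdSimplex ℝ ι)
    (hxE : ∀ᵐ s ∂volume.restrict (Set.Icc 0 T), (fun a => xE a s) ∈ stdSimplex ℝ ι)
    {U R : ι → ℝ → ℝ}
    (hU : ∀ a t, U a t = u₀ + ∫ s in (0 : ℝ)..t, v a s * (xN a s + xE a s))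
    (hR : ∀ a t, R a t = 1 / Φ * (1 - ∫ s in (0 : ℝ)..t, v a s))
    (hβ : β ≤ u₀ + 1 / Φ)
    (hegal : ∀ᵐ s ∂volume.restrict (Set.Icc 0 T),
      ∀ a, 0 < xE a s → ∀ b, U a s + R a s ≤ U b s + R b s)
    (hcount : ∀ t ∈ Set.Icc 0 T, ({a | U a t + R a t ≤ β}.ncard : ℝ) ≤ Φ) :
    (∀ a, ∀ t ∈ Set.Icc 0 T, β ≤ U a t + R a t) ∧
      ∀ a, ∫ s in (0 : ℝ)..T, v a s = 1 → β ≤ U a T := by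
  have hv (a) : IntervalIntegrable (v a) volume 0 T :=
    (intervalIntegrable_iff_integrableOn_Icc_of_le hT).2 (hv_int a)
  have hvx (a) : IntervalIntegrable (fun s => v a s * (xN a s + xE a s)) volume 0 T := by
    have hN := intervalIntegrable_mul_of_ae_mem_Icc hT (hv_int a) (hxN_meas a).aestronglyMeasurable
      (hxN.mono fun s hs => mem_Icc_of_mem_stdSimplex hs a)
    have hE := intervalIntegrable_mul_of_ae_mem_Icc hT (hv_int a) (hxE_meas a).aestronglyMeasurable
      (hxE.mono fun s hs => mem_Icc_of_mem_stdSimplex hs a)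
    simpa only [mul_add] using hN.add hE
  have hf (a) : IntervalIntegrable (fun s => v a s * (xN a s + xE a s - 1 / Φ)) volume 0 T := by
    simpa only [mul_sub] using (hvx a).sub ((hv a).mul_const (1 / Φ))
  have hUR (a) {t} (ht : t ∈ Set.Icc 0 T) : U a t + R a t =
      u₀ + 1 / Φ + ∫ s in (0 : ℝ)..t, v a s * (xN a s + xE a s - 1 / Φ) := by
    have hsub : Set.uIcc 0 t ⊆ Set.uIcc 0 T :=
      Set.uIcc_subset_uIcc_left (Set.Icc_subset_uIcc ht)
    rw [hU, hR, add_assoc,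
      integral_mul_add_mul_sub_integral ((hv a).mono_set hsub) ((hvx a).mono_set hsub)]
    ring
  have hbound (a) {t} (ht : t ∈ Set.Icc 0 T) : β ≤ U a t + R a t := by
    rw [hUR a ht]
    refine le_add_integral_of_ae_exists_minimizer_nonneg hf (fun _ => hβ) ?_ a ht
    filter_upwards [hxN, hxE, hegal, ae_all_iff.2 hv_nonneg, ae_restrict_mem measurableSet_Icc]
      with s hN hE hgreedy hvs hs
    simp only [← hUR _ hs]
    rintro ⟨b, hb⟩
    obtain ⟨m, hmin, hshare⟩ :=
      exists_minimizer_one_div_le_of_greedy hE.2 hgreedy (hcount s hs) ⟨b, hb.le⟩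
    exact ⟨m, hmin, mul_nonneg (hvs m) (by linarith [hN.1 m])⟩
  refine ⟨fun a t => hbound a, fun a hunit => ?_⟩
  simpa [hR, hunit] using hbound a (Set.right_mem_Icc.2 hT)

theorem stmt_10
    (n : ℕ) (hn : 2 ≤ n) (T : ℝ) (hT : 0 < T)
    (v : Fin n → ℝ → ℝ)
    (hv_meas : ∀ a, Measurable (v a))
    (hv_nonneg : ∀ a, ∀ᵐ s ∂(volume.restrict (Set.Icc (0:ℝ) T)), 0 ≤ v a s)
    (hv_int : ∀ a, IntegrableOn (v a) (Set.Icc (0:ℝ) T))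
    (hv_unit : ∀ a, ∫ s in (0:ℝ)..T, v a s = 1)
    (xN xE : Fin n → ℝ → ℝ)
    (hxN_meas : ∀ a, Measurable (xN a)) (hxE_meas : ∀ a, Measurable (xE a))
    (hx_feas : ∀ᵐ s ∂(volume.restrict (Set.Icc (0:ℝ) T)),
      (∀ a, 0 ≤ xN a s) ∧ (∀ a, 0 ≤ xE a s) ∧
      (∑ a, xN a s = 1) ∧ (∑ a, xE a s = 1))
    (U : Fin n → ℝ → ℝ)
    (hU : ∀ a t, U a t =
      1 / (n : ℝ) + ∫ s in (0:ℝ)..t, v a s * (xN a s + xE a s))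
    (Φ : ℝ) (hΦ : Φ = Real.sqrt ((n : ℝ) * Real.log ((n : ℝ) + 1)))
    (R : Fin n → ℝ → ℝ)
    (hR : ∀ a t, R a t = (1 / Φ) * (1 - ∫ s in (0:ℝ)..t, v a s))
    (p : ℝ) (hp : p ≤ -1)
    (βstar : ℝ)
    (hβstar : βstar = (1 / 2) * (n : ℝ) ^ (-(1 / 2 : ℝ) - 1 / (2 * |p|)) *
      (Real.log ((n : ℝ) + 1)) ^ (-(1 / 2 : ℝ) + 1 / (2 * |p|)))
    (W : ℝ) (hW0 : 0 < W) (hW1 : W ≤ 1)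
    (hegal : ∀ᵐ s ∂(volume.restrict (Set.Icc (0:ℝ) T)),
      ∀ a, 0 < xE a s → ∀ b, U a s + R a s ≤ U b s + R b s)
    (hcount : ∀ t ∈ Set.Icc (0:ℝ) T,
      ({a : Fin n | U a t + R a t ≤ βstar * W}.ncard : ℝ) ≤
        Real.sqrt ((n : ℝ) * Real.log ((n : ℝ) + 1))) :
    (∀ a, ∀ t ∈ Set.Icc (0:ℝ) T, βstar * W ≤ U a t + R a t) ∧
    (∀ a, βstar * W ≤ U a T) := by
  subst hΦ hβstar
  have hn_pos : (0 : ℝ) < n := Nat.cast_pos.2 (two_pos.trans_le hn)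
  have hβ := (half_mul_rpow_mul_log_rpow_mul_le (q := 1 / (2 * |p|)) hn_pos (by positivity)
    hW1).trans (le_add_of_nonneg_left (one_div_pos.2 hn_pos).le)
  have hgen := stmt_10_general hT.le hv_nonneg hv_int hxN_meas hxE_meas
    (hx_feas.mono fun s hs => ⟨hs.1, hs.2.2.1⟩) (hx_feas.mono fun s hs => ⟨hs.2.1, hs.2.2.2⟩)
    hU hR hβ hegal hcount
  exact ⟨hgen.1, fun a => hgen.2 a (hv_unit a)⟩
end

section
/- There is an absolute constant c > 0 such that the following holds. In the Mixed Greedy model with unit monopolist utilities, let n ≥ 2 and let p ≤ −1 be a real. Suppose the Nashian copy x^N satisfies the Nashian Greedy condition with respect to the total utilities U, and the egalitarian copy x^E satisfies the regularized egalitarian greedy condition. Then for every feasible allocation x* (measurable, x*_a s ≥ 0, ∑_a x*_a s ≤ 1 for a.e. s) with U*_a = ∫_0^T v a s · x*_a s ds > 0 for every agent a: ((1/n) ∑_a (U a T)^p)^{1/p} ≥ c · ((1/n) ∑_a (U*_a)^p)^{1/p} / √(n · log(n+1)). -/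
open MeasureTheory Real

/-!
Let `u a` be the utility of agent `a` under Mixed Greedy, `w a` its utility in the reference
allocation and `Φ = √(n log (n + 1))`.

*Nashian copy.* The Nashian rule maximizes `v / u`, so `∑ log u` grows at least as fast as
`∑ v x* / u`. Since `u` goes from `1 / n` to at most `1 / n + 2`, at every time `t` we get
`∑_a (∫_0^t v a x* a) / u a t ≤ n log (1 + 2 n) ≤ 2 Φ²`.

*Egalitarian copy.* Put `f = w / (6 Φ)` and choose `θ` with `∑ f a ^ p = (Φ / 2) θ ^ p`. Consider an
agent whose regularized utility is below `θ`. Either `f a ≤ θ`, which by Markov's inequality holds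
for at most `Φ / 2` agents; or its small regularizer shows that it has already been offered most of
`w a`, and the Nashian bound allows at most `2 Φ / 5` of these. So fewer than `Φ` agents are below
`θ` at any time, the egalitarian copy gives one of the poorest a share of at least `1 / Φ`, and this
makes up for the decay of its regularizer: the minimal regularized utility cannot drop below `θ`.
The regularizer vanishes at time `T`, hence `u a ≥ θ` at the end.

*Conclusion.* For `p ≤ -1` and `u ≥ θ` one has `u ^ p ≤ f ^ p + θ ^ p (f / u)`. Summing, with
`∑ f / u ≤ Φ / 3`, gives `∑ u ^ p ≤ 2 ∑ f ^ p ≤ ∑ (f / 2) ^ p`, which is the claim with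
`c = 1 / 12`.
-/

/-! ### Calculus almost everywhere -/

lemma integral_le_sub_of_le_deriv_of_monotoneOn {f g : ℝ → ℝ} {a b : ℝ} (hab : a ≤ b)
    (hf : MonotoneOn f (Set.Icc a b)) (hg : IntervalIntegrable g volume a b)
    (hgf : ∀ᵐ s ∂volume.restrict (Set.Icc a b), g s ≤ deriv f s) :
    ∫ s in a..b, g s ≤ f b - f a := by
  rw [← Set.uIcc_of_le hab] at hf
  have hderiv : ∫ s in a..b, deriv f s ≤ f b - f a := by
    have hfab : f a ≤ f b := hf Set.left_mem_uIcc Set.right_mem_uIcc hab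
    have hmem := hf.intervalIntegral_deriv_mem_uIcc
    rw [Set.uIcc_of_le (sub_nonneg.2 hfab)] at hmem
    exact hmem.2
  exact (intervalIntegral.integral_mono_ae_restrict hab hg hf.intervalIntegrable_deriv hgf).trans
    hderiv

lemma monotoneOn_integral_of_ae_nonneg {f : ℝ → ℝ} {a b : ℝ} (hf : IntervalIntegrable f volume a b)
    (hf0 : ∀ᵐ s ∂volume.restrict (Set.Icc a b), 0 ≤ f s) :
    MonotoneOn (fun t ↦ ∫ s in a..t, f s) (Set.Icc a b) := by
  intro r hr t ht hrt
  have hft : IntervalIntegrable f volume a t := hf.mono_set <| by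
    rw [Set.uIcc_of_le ht.1, Set.uIcc_of_le (ht.1.trans ht.2)]
    exact Set.Icc_subset_Icc_right ht.2
  have hft0 := ae_restrict_of_ae_restrict_of_subset
    (Set.Ioc_subset_Icc_self.trans (Set.Icc_subset_Icc_right ht.2)) hf0
  exact intervalIntegral.integral_mono_interval le_rfl hr.1 hrt hft0 hft

lemma ae_restrict_hasDerivAt_integral {f : ℝ → ℝ} {a b : ℝ} (hab : a ≤ b)
    (hf : IntervalIntegrable f volume a b) :
    ∀ᵐ s ∂volume.restrict (Set.Icc a b), HasDerivAt (fun t ↦ ∫ r in a..t, f r) (f s) s := by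
  rw [ae_restrict_iff' measurableSet_Icc, ← Set.uIcc_of_le hab]
  filter_upwards [hf.ae_hasDerivAt_integral] with s hs hsab
  exact hs hsab a Set.left_mem_uIcc

lemma absolutelyContinuousOnInterval_inf_s11 {f g : ℝ → ℝ} {a b : ℝ}
    (hf : AbsolutelyContinuousOnInterval f a b) (hg : AbsolutelyContinuousOnInterval g a b) :
    AbsolutelyContinuousOnInterval (f ⊓ g) a b := by
  refine squeeze_zero (fun _ ↦ Finset.sum_nonneg fun _ _ ↦ dist_nonneg) (fun E ↦ ?_)
    (by simpa using Filter.Tendsto.add hf hg)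
  rw [← Finset.sum_add_distrib]
  refine Finset.sum_le_sum fun i _ ↦ ?_
  exact (abs_min_sub_min_le_max _ _ _ _).trans
    (max_le_add_of_nonneg (abs_nonneg _) (abs_nonneg _))

lemma absolutelyContinuousOnInterval_finset_inf'_s11 {ι : Type*} {f : ι → ℝ → ℝ} {a b : ℝ}
    {t : Finset ι} (ht : t.Nonempty) (hf : ∀ i ∈ t, AbsolutelyContinuousOnInterval (f i) a b) :
    AbsolutelyContinuousOnInterval (t.inf' ht f) a b :=
  Finset.inf'_induction ht f (p := fun g ↦ AbsolutelyContinuousOnInterval g a b)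
    (fun _ hg _ hh ↦ absolutelyContinuousOnInterval_inf_s11 hg hh) hf

lemma ae_restrict_differentiableAt_of_absolutelyContinuousOnInterval {f : ℝ → ℝ} {a b : ℝ}
    (hab : a ≤ b) (hf : AbsolutelyContinuousOnInterval f a b) :
    ∀ᵐ s ∂volume.restrict (Set.Icc a b), DifferentiableAt ℝ f s := by
  rw [ae_restrict_iff' measurableSet_Icc, ← Set.uIcc_of_le hab]
  exact hf.ae_differentiableAt

lemma deriv_eq_of_eventually_le_of_eq {f g : ℝ → ℝ} {s : ℝ} (hf : DifferentiableAt ℝ f s)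
    (hg : DifferentiableAt ℝ g s) (hle : f ≤ᶠ[nhds s] g) (heq : f s = g s) :
    deriv f s = deriv g s := by
  have htouch : IsLocalMin (g - f) s := hle.mono fun r hr ↦ by simpa [heq] using hr
  have hderiv := htouch.deriv_eq_zero
  rw [deriv_sub hg hf, sub_eq_zero] at hderiv
  exact hderiv.symm

lemma le_of_absolutelyContinuousOnInterval_of_deriv_nonneg {f : ℝ → ℝ} {a b : ℝ} (hab : a ≤ b)
    (hf : AbsolutelyContinuousOnInterval f a b)
    (hf0 : ∀ᵐ s ∂volume.restrict (Set.Icc a b), 0 ≤ deriv f s) : f a ≤ f b := by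
  have hint := intervalIntegral.integral_nonneg_of_ae_restrict hab hf0
  rwa [hf.integral_deriv_eq_sub, sub_nonneg] at hint

/-- A minimizer touches `F = min θ (min_i W i)` from above, so `F` has the same derivative there,
while `F' = 0` wherever `F = θ`; hence `F` is nondecreasing. -/
lemma forall_le_of_exists_minimizer_deriv_nonneg {ι : Type*} [Finite ι] {a b θ : ℝ}
    {W : ι → ℝ → ℝ} (hab : a ≤ b) (hW : ∀ i, AbsolutelyContinuousOnInterval (W i) a b)
    (hWa : ∀ i, θ ≤ W i a)
    (hmin : ∀ᵐ s ∂volume.restrict (Set.Icc a b), (∃ i, W i s < θ) →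
      ∃ i, (∀ j, W i s ≤ W j s) ∧ 0 ≤ deriv (W i) s) (i : ι) :
    θ ≤ W i b := by
  cases nonempty_fintype ι
  have : Nonempty ι := ⟨i⟩
  obtain ⟨F, hFAC, hFθ, hFW, le_F⟩ : ∃ F : ℝ → ℝ, AbsolutelyContinuousOnInterval F a b ∧
      (∀ s, F s ≤ θ) ∧ (∀ j s, F s ≤ W j s) ∧
      ∀ {x s : ℝ}, x ≤ θ → (∀ j, x ≤ W j s) → x ≤ F s := by
    refine ⟨(fun _ ↦ θ) ⊓ Finset.univ.inf' Finset.univ_nonempty W, ?_, fun s ↦ inf_le_left,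
      fun j s ↦ inf_le_right.trans (Finset.inf'_le W (Finset.mem_univ j) s), fun hxθ hxW ↦ ?_⟩
    · exact absolutelyContinuousOnInterval_inf_s11
        (LipschitzWith.const θ).lipschitzOnWith.absolutelyContinuousOnInterval
        (absolutelyContinuousOnInterval_finset_inf'_s11 _ fun j _ ↦ hW j)
    · rw [Pi.inf_apply, Finset.inf'_apply]
      exact le_inf hxθ (Finset.le_inf' _ _ fun j _ ↦ hxW j)
  suffices hFmono : F a ≤ F b from (le_F le_rfl hWa).trans (hFmono.trans (hFW i b))
  refine le_of_absolutelyContinuousOnInterval_of_deriv_nonneg hab hFAC ?_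
  filter_upwards [hmin, ae_restrict_differentiableAt_of_absolutelyContinuousOnInterval hab hFAC,
    ae_all_iff.2 fun j ↦
      ae_restrict_differentiableAt_of_absolutelyContinuousOnInterval hab (hW j)] with s hs hFs hWs
  by_cases hlow : ∃ j, W j s < θ
  · obtain ⟨j, hjmin, hj⟩ := hs hlow
    obtain ⟨j₀, hj₀⟩ := hlow
    have hFj : F s = W j s := (hFW j s).antisymm (le_F ((hjmin j₀).trans hj₀.le) hjmin)
    rwa [deriv_eq_of_eventually_le_of_eq hFs (hWs j) (.of_forall (hFW j)) hFj]
  · have hF : F s = θ := (hFθ s).antisymm (le_F le_rfl (by simpa using hlow))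
    rw [deriv_eq_of_eventually_le_of_eq hFs (differentiableAt_const θ) (.of_forall hFθ) hF,
      deriv_const]

/-- The potential is `∑ log u`; as `u` is nondecreasing, the denominators may be frozen at the final
time `b`. -/
lemma sum_integral_div_le_sum_log_sub_log {ι : Type*} [Fintype ι] {a b : ℝ} {u y z : ι → ℝ → ℝ}
    (hab : a ≤ b) (humono : ∀ i, MonotoneOn (u i) (Set.Icc a b)) (hu0 : ∀ i, 0 < u i a)
    (hu : ∀ i, ∀ᵐ s ∂volume.restrict (Set.Icc a b), HasDerivAt (u i) (y i s) s)
    (hz : ∀ i, IntervalIntegrable (z i) volume a b)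
    (hz0 : ∀ i, ∀ᵐ s ∂volume.restrict (Set.Icc a b), 0 ≤ z i s)
    (hzy : ∀ᵐ s ∂volume.restrict (Set.Icc a b), ∑ i, z i s / u i s ≤ ∑ i, y i s / u i s) :
    ∑ i, (∫ s in a..b, z i s) / u i b ≤ ∑ i, (log (u i b) - log (u i a)) := by
  have hpos (i : ι) {s : ℝ} (hs : s ∈ Set.Icc a b) : 0 < u i s :=
    (hu0 i).trans_le (humono i (Set.left_mem_Icc.2 hab) hs hs.1)
  have hlogmono : MonotoneOn (fun s ↦ ∑ i, log (u i s)) (Set.Icc a b) := fun r hr s hs hrs ↦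
    Finset.sum_le_sum fun i _ ↦ log_le_log (hpos i hr) (humono i hr hs hrs)
  have hint (i : ι) : IntervalIntegrable (fun s ↦ z i s / u i b) volume a b := (hz i).div_const _
  have hrate : ∀ᵐ s ∂volume.restrict (Set.Icc a b),
      ∑ i, z i s / u i b ≤ deriv (fun s ↦ ∑ i, log (u i s)) s := by
    filter_upwards [ae_all_iff.2 hu, ae_all_iff.2 hz0, hzy, ae_restrict_mem measurableSet_Icc]
      with s hus hzs hzys hs
    have hderiv : HasDerivAt (fun s ↦ ∑ i, log (u i s)) (∑ i, y i s / u i s) s :=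
      HasDerivAt.fun_sum fun i _ ↦ (hus i).log (hpos i hs).ne'
    rw [hderiv.deriv]
    refine (Finset.sum_le_sum fun i _ ↦ ?_).trans hzys
    exact div_le_div_of_nonneg_left (hzs i) (hpos i hs) (humono i hs (Set.right_mem_Icc.2 hab) hs.2)
  calc ∑ i, (∫ s in a..b, z i s) / u i b = ∫ s in a..b, ∑ i, z i s / u i b := by
        rw [intervalIntegral.integral_finsetSum fun i _ ↦ hint i]
        simp only [intervalIntegral.integral_div]
    _ ≤ ∑ i, log (u i b) - ∑ i, log (u i a) :=
        integral_le_sub_of_le_deriv_of_monotoneOn hab hlogmono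
          (by simpa only [Finset.sum_fn] using IntervalIntegrable.sum Finset.univ fun i _ ↦ hint i)
          hrate
    _ = ∑ i, (log (u i b) - log (u i a)) := (Finset.sum_sub_distrib ..).symm

/-! ### Finite families of reals -/

section FiniteFamilies

variable {ι : Type*} [Fintype ι]

lemma sum_mul_le_sum_mul_of_supported_on_max {w x y : ι → ℝ} (hw : ∀ i, 0 ≤ w i)
    (hx0 : ∀ i, 0 ≤ x i) (hx : ∑ i, x i = 1) (hmax : ∀ i j, 0 < x i → w j ≤ w i)
    (hy0 : ∀ i, 0 ≤ y i) (hy : ∑ i, y i ≤ 1) :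
    ∑ i, w i * y i ≤ ∑ i, w i * x i := by
  have hle (j : ι) : w j ≤ ∑ i, w i * x i := by
    rw [← mul_one (w j), ← hx, Finset.mul_sum]
    refine Finset.sum_le_sum fun i _ ↦ ?_
    rcases (hx0 i).eq_or_lt with hi | hi
    · simp [← hi]
    · exact mul_le_mul_of_nonneg_right (hmax i j hi) hi.le
  calc ∑ j, w j * y j ≤ ∑ j, (∑ i, w i * x i) * y j :=
        Finset.sum_le_sum fun j _ ↦ mul_le_mul_of_nonneg_right (hle j) (hy0 j)
    _ = (∑ i, w i * x i) * ∑ j, y j := (Finset.mul_sum ..).symm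
    _ ≤ ∑ i, w i * x i :=
        mul_le_of_le_one_right (Finset.sum_nonneg fun i _ ↦ mul_nonneg (hw i) (hx0 i)) hy

lemma exists_minimizer_one_div_le_of_card_lt {W x : ι → ℝ} {θ Φ : ℝ}
    (hx0 : ∀ i, 0 ≤ x i) (hx : ∑ i, x i = 1) (hmin : ∀ i, 0 < x i → ∀ j, W i ≤ W j)
    (hlow : ∃ i, W i < θ) (hcard : ({i | W i < θ} : Finset ι).card < Φ) :
    ∃ i, (∀ j, W i ≤ W j) ∧ 1 / Φ ≤ x i := by
  obtain ⟨i₀, hi₀⟩ := hlow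
  have hΦ : 0 < Φ := (Nat.cast_nonneg _).trans_lt hcard
  have hsum : ∑ i with W i < θ, x i = 1 := by
    rw [← hx]
    refine Finset.sum_filter_of_ne fun i _ hi ↦ ?_
    exact (hmin i ((hx0 i).lt_of_ne' hi) i₀).trans_lt hi₀
  have hlt : ∑ _i : ι with W _i < θ, 1 / Φ < ∑ i with W i < θ, x i := by
    rw [hsum, Finset.sum_const, nsmul_eq_mul, mul_one_div]
    exact (div_lt_one hΦ).2 hcard
  obtain ⟨i, -, hi⟩ := Finset.exists_lt_of_sum_lt hlt
  exact ⟨i, hmin i ((one_div_pos.2 hΦ).trans hi), hi.le⟩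

lemma card_filter_le_mul_le_sum {f : ι → ℝ} (hf : ∀ i, 0 ≤ f i) (c : ℝ) :
    ({i | c ≤ f i} : Finset ι).card * c ≤ ∑ i, f i := by
  rw [← nsmul_eq_mul]
  calc ({i | c ≤ f i} : Finset ι).card • c ≤ ∑ i with c ≤ f i, f i :=
        Finset.card_nsmul_le_sum _ _ _ fun i hi ↦ (Finset.mem_filter.1 hi).2
    _ ≤ ∑ i, f i :=
        Finset.sum_le_sum_of_subset_of_nonneg (Finset.filter_subset _ _) fun i _ _ ↦ hf i

lemma card_filter_le_of_sum_rpow_le {f : ι → ℝ} {p c θ : ℝ} (hp : p ≤ 0) (hθ : 0 < θ)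
    (hf : ∀ i, 0 < f i) (hsum : ∑ i, f i ^ p ≤ c * θ ^ p) :
    ({i | f i ≤ θ} : Finset ι).card ≤ c := by
  have hsubset : ({i | f i ≤ θ} : Finset ι) ⊆ ({i | θ ^ p ≤ f i ^ p} : Finset ι) :=
    Finset.monotone_filter_right _ fun i _ hi ↦ rpow_le_rpow_of_nonpos (hf i) hi hp
  refine (Nat.cast_le.2 (Finset.card_le_card hsubset)).trans ?_
  refine le_of_mul_le_mul_right ?_ (rpow_pos_of_pos hθ p)
  exact (card_filter_le_mul_le_sum (fun i ↦ (rpow_pos_of_pos (hf i) p).le) _).trans hsum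

lemma exists_sum_rpow_eq_mul_rpow {f : ι → ℝ} {p c M : ℝ} (hp : p < 0) (hc : 0 < c)
    (hcard : c ≤ Fintype.card ι) (hf : ∀ i, 0 < f i) (hfM : ∀ i, f i ≤ M) :
    ∃ θ, 0 < θ ∧ θ ≤ M ∧ ∑ i, f i ^ p = c * θ ^ p := by
  have hι : Nonempty ι := Fintype.card_pos_iff.1 (Nat.cast_pos.1 (hc.trans_le hcard))
  obtain ⟨i₀⟩ := hι
  have hM : 0 < M := (hf i₀).trans_le (hfM i₀)
  have hsum : 0 < ∑ i, f i ^ p :=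
    Finset.sum_pos (fun i _ ↦ rpow_pos_of_pos (hf i) p) ⟨i₀, Finset.mem_univ i₀⟩
  have hθ : 0 < ((∑ i, f i ^ p) / c) ^ (1 / p) := rpow_pos_of_pos (div_pos hsum hc) _
  have hlevel : ∑ i, f i ^ p = c * (((∑ i, f i ^ p) / c) ^ (1 / p)) ^ p := by
    rw [one_div, rpow_inv_rpow (div_pos hsum hc).le hp.ne, mul_div_cancel₀ _ hc.ne']
  refine ⟨_, hθ, ?_, hlevel⟩
  rw [← rpow_le_rpow_iff_of_neg hM hθ hp]
  refine le_of_mul_le_mul_left ?_ hc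
  calc c * M ^ p ≤ Fintype.card ι * M ^ p := by gcongr
    _ = ∑ _i : ι, M ^ p := by simp
    _ ≤ ∑ i, f i ^ p := Finset.sum_le_sum fun i _ ↦ rpow_le_rpow_of_nonpos (hf i) (hfM i) hp.le
    _ = _ := hlevel

/-- An agent counted here has either `f a ≤ θ` or `g a / u a ≥ 5 Φ`: there are at most `Φ / 2` of
the former and `2 Φ / 5` of the latter. -/
lemma card_add_lt_of_sum_div_le {u r f g : ι → ℝ} {p θ Φ : ℝ} (hp : p ≤ 0) (hθ : 0 < θ)
    (hΦ : 0 < Φ) (hu : ∀ a, 0 < u a) (hr : ∀ a, 0 ≤ r a) (hf : ∀ a, 0 < f a) (hg : ∀ a, 0 ≤ g a)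
    (hfg : ∀ a, Φ * (6 * f a - r a) ≤ g a) (hratio : ∑ a, g a / u a ≤ 2 * Φ ^ 2)
    (hlevel : ∑ a, f a ^ p ≤ Φ / 2 * θ ^ p) :
    ({a | u a + r a < θ} : Finset ι).card < Φ := by
  classical
  have hsubset : ({a | u a + r a < θ} : Finset ι) ⊆
      ({a | f a ≤ θ} : Finset ι) ∪ ({a | 5 * Φ ≤ g a / u a} : Finset ι) := by
    intro a ha
    simp only [Finset.mem_union, Finset.mem_filter_univ] at ha ⊢
    refine or_iff_not_imp_left.2 fun hfa ↦ ?_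
    rw [le_div_iff₀ (hu a)]
    calc 5 * Φ * u a = Φ * (5 * u a) := by ring
      _ ≤ Φ * (6 * f a - r a) := by gcongr; linarith [hr a, hu a]
      _ ≤ g a := hfg a
  have hpoor := card_filter_le_of_sum_rpow_le hp hθ hf hlevel
  have hserved : (({a | 5 * Φ ≤ g a / u a} : Finset ι).card : ℝ) ≤ 2 / 5 * Φ := by
    have hmarkov := (card_filter_le_mul_le_sum
      (fun a ↦ div_nonneg (hg a) (hu a).le) (5 * Φ)).trans hratio
    exact le_of_mul_le_mul_right (hmarkov.trans_eq (by ring)) (by positivity : 0 < 5 * Φ)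
  have hunion : (({a | u a + r a < θ} : Finset ι).card : ℝ) ≤
      ({a | f a ≤ θ} : Finset ι).card + ({a | 5 * Φ ≤ g a / u a} : Finset ι).card :=
    mod_cast (Finset.card_le_card hsubset).trans (Finset.card_union_le _ _)
  linarith

lemma rpow_le_rpow_add_mul_div {p θ u f : ℝ} (hp : p ≤ -1) (hθ : 0 < θ) (hu : θ ≤ u) (hf : 0 < f) :
    u ^ p ≤ f ^ p + θ ^ p * (f / u) := by
  have hu0 : 0 < u := hθ.trans_le hu
  rcases le_total f θ with hfθ | hθf
  · have hle : u ^ p ≤ f ^ p := rpow_le_rpow_of_nonpos hf (hfθ.trans hu) (by linarith)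
    have : 0 ≤ θ ^ p * (f / u) := by positivity
    linarith
  · have hle : u ^ p ≤ θ ^ p * (f / u) :=
      calc u ^ p = u ^ (p + 1) / u := by rw [rpow_add_one hu0.ne', mul_div_cancel_right₀ _ hu0.ne']
        _ ≤ θ ^ (p + 1) / u := by
          gcongr ?_ / u
          exact rpow_le_rpow_of_nonpos hθ hu (by linarith)
        _ = θ ^ p * (θ / u) := by rw [rpow_add_one hθ.ne', mul_div_assoc]
        _ ≤ θ ^ p * (f / u) := by gcongr
    have : 0 ≤ f ^ p := by positivity
    linarith

lemma sum_rpow_le_sum_half_rpow {u f : ι → ℝ} {p θ c : ℝ} (hp : p ≤ -1) (hθ : 0 < θ)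
    (hu : ∀ a, θ ≤ u a) (hf : ∀ a, 0 < f a) (hlevel : ∑ a, f a ^ p = c * θ ^ p)
    (hratio : ∑ a, f a / u a ≤ c) :
    ∑ a, u a ^ p ≤ ∑ a, (f a / 2) ^ p := by
  have hhalf (a : ι) : 2 * f a ^ p ≤ (f a / 2) ^ p := by
    rw [div_rpow (hf a).le zero_le_two, div_eq_inv_mul, ← rpow_neg zero_le_two]
    gcongr
    exacts [(rpow_pos_of_pos (hf a) p).le, self_le_rpow_of_one_le one_le_two (by linarith)]
  calc ∑ a, u a ^ p ≤ ∑ a, (f a ^ p + θ ^ p * (f a / u a)) :=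
        Finset.sum_le_sum fun a _ ↦ rpow_le_rpow_add_mul_div hp hθ (hu a) (hf a)
    _ = ∑ a, f a ^ p + θ ^ p * ∑ a, f a / u a := by
        rw [Finset.sum_add_distrib, Finset.mul_sum]
    _ ≤ ∑ a, f a ^ p + θ ^ p * c := by gcongr
    _ = ∑ a, 2 * f a ^ p := by rw [← Finset.mul_sum, hlevel]; ring
    _ ≤ ∑ a, (f a / 2) ^ p := Finset.sum_le_sum fun a _ ↦ hhalf a

/-- The power mean with exponent `p` and uniform weights. It is meant for `p ≠ 0` and positive
entries only. -/
noncomputable def pMean (p : ℝ) (u : ι → ℝ) : ℝ :=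
  (1 / Fintype.card ι * ∑ a, u a ^ p) ^ (1 / p)

lemma pMean_le_pMean_of_sum_rpow_le [Nonempty ι] {p : ℝ} {u w : ι → ℝ} (hp : p < 0)
    (hu : ∀ a, 0 < u a) (hsum : ∑ a, u a ^ p ≤ ∑ a, w a ^ p) : pMean p w ≤ pMean p u := by
  have hpos : 0 < ∑ a, u a ^ p :=
    Finset.sum_pos (fun a _ ↦ rpow_pos_of_pos (hu a) p) Finset.univ_nonempty
  refine rpow_le_rpow_of_nonpos (by positivity) ?_ (one_div_neg.2 hp).le
  gcongr

lemma pMean_div_const {p C : ℝ} {w : ι → ℝ} (hp : p ≠ 0) (hC : 0 ≤ C) (hw : ∀ a, 0 ≤ w a) :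
    pMean p (fun a ↦ w a / C) = pMean p w / C := by
  have hsum : 0 ≤ ∑ a, w a ^ p := Finset.sum_nonneg fun a _ ↦ rpow_nonneg (hw a) p
  simp only [pMean, fun a ↦ div_rpow (hw a) hC p, ← Finset.sum_div, ← mul_div_assoc]
  rw [div_rpow (by positivity) (by positivity), one_div p, rpow_rpow_inv hC hp]

end FiniteFamilies

/-! ### The Mixed Greedy model -/

section MixedGreedy

variable {ι : Type*} {T κ Φ k : ℝ} {v x y : ι → ℝ → ℝ}

/-- Valuations on `[0, T]` with unit monopolist utilities. -/
structure IsUnitValuation (T : ℝ) (v : ι → ℝ → ℝ) : Prop where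
  nonneg : ∀ a, ∀ᵐ s ∂volume.restrict (Set.Icc 0 T), 0 ≤ v a s
  intervalIntegrable : ∀ a, IntervalIntegrable (v a) volume 0 T
  integral_eq_one : ∀ a, ∫ s in (0 : ℝ)..T, v a s = 1

/-- A feasible allocation of `k` copies of each item arriving during `[0, T]`: agent `a` receives
the fraction `x a s` of the item arriving at time `s`. -/
structure IsAllocation [Fintype ι] (T k : ℝ) (x : ι → ℝ → ℝ) : Prop where
  measurable : ∀ a, Measurable (x a)
  nonneg : ∀ᵐ s ∂volume.restrict (Set.Icc 0 T), ∀ a, 0 ≤ x a s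
  sum_le : ∀ᵐ s ∂volume.restrict (Set.Icc 0 T), ∑ a, x a s ≤ k

/-- The utility that agent `a` has accrued from the allocation `x` up to time `t`. -/
noncomputable def accrued (v x : ι → ℝ → ℝ) (a : ι) (t : ℝ) : ℝ :=
  ∫ s in (0 : ℝ)..t, v a s * x a s

/-- The utility of the model, in which every agent starts with the endowment `κ`. -/
noncomputable def utility (κ : ℝ) (v x : ι → ℝ → ℝ) (a : ι) (t : ℝ) : ℝ :=
  κ + accrued v x a t

/-- The regularizer of the egalitarian copy: the share of the monopolist utility still to come,
scaled by `1 / Φ`. -/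
noncomputable def regularizer (Φ : ℝ) (v : ι → ℝ → ℝ) (a : ι) (t : ℝ) : ℝ :=
  1 / Φ * (1 - ∫ s in (0 : ℝ)..t, v a s)

/-- A fully allocated copy of the items satisfying the Nashian Greedy condition: it goes to the
agents maximizing `v a s / U a s`. -/
structure IsNashianGreedy [Fintype ι] (T : ℝ) (v U x : ι → ℝ → ℝ) : Prop
    extends IsAllocation T 1 x where
  sum_eq_one : ∀ᵐ s ∂volume.restrict (Set.Icc 0 T), ∑ a, x a s = 1
  greedy : ∀ᵐ s ∂volume.restrict (Set.Icc 0 T), ∀ a b, 0 < x a s → v b s * U a s ≤ v a s * U b s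

/-- A fully allocated copy of the items that goes to the agents minimizing `W a s`. For the
egalitarian copy of Mixed Greedy, `W` is the regularized utility. -/
structure IsEgalitarianGreedy [Fintype ι] (T : ℝ) (W x : ι → ℝ → ℝ) : Prop
    extends IsAllocation T 1 x where
  sum_eq_one : ∀ᵐ s ∂volume.restrict (Set.Icc 0 T), ∑ a, x a s = 1
  greedy : ∀ᵐ s ∂volume.restrict (Set.Icc 0 T), ∀ a, 0 < x a s → ∀ b, W a s ≤ W b s

namespace IsUnitValuation

lemma integral_le_one (hv : IsUnitValuation T v) {t : ℝ} (ht : t ∈ Set.Icc 0 T) (a : ι) :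
    ∫ s in (0 : ℝ)..t, v a s ≤ 1 := by
  rw [← hv.integral_eq_one a]
  exact monotoneOn_integral_of_ae_nonneg (hv.intervalIntegrable a) (hv.nonneg a) ht
    (Set.right_mem_Icc.2 (ht.1.trans ht.2)) ht.2

lemma regularizer_nonneg (hv : IsUnitValuation T v) (hΦ : 0 ≤ Φ) {t : ℝ} (ht : t ∈ Set.Icc 0 T)
    (a : ι) : 0 ≤ regularizer Φ v a t :=
  mul_nonneg (one_div_nonneg.2 hΦ) (sub_nonneg.2 (hv.integral_le_one ht a))

lemma regularizer_end (hv : IsUnitValuation T v) (a : ι) : regularizer Φ v a T = 0 := by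
  rw [regularizer, hv.integral_eq_one, sub_self, mul_zero]

end IsUnitValuation

variable [Fintype ι]

namespace IsAllocation

lemma add {l : ℝ} (hx : IsAllocation T k x) (hy : IsAllocation T l y) :
    IsAllocation T (k + l) (x + y) where
  measurable a := (hx.measurable a).add (hy.measurable a)
  nonneg := by
    filter_upwards [hx.nonneg, hy.nonneg] with s hxs hys a using add_nonneg (hxs a) (hys a)
  sum_le := by
    filter_upwards [hx.sum_le, hy.sum_le] with s hxs hys
    simpa only [Pi.add_apply, Finset.sum_add_distrib] using add_le_add hxs hys

lemma ae_le (hx : IsAllocation T k x) :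
    ∀ᵐ s ∂volume.restrict (Set.Icc 0 T), ∀ a, x a s ≤ k := by
  filter_upwards [hx.nonneg, hx.sum_le] with s hxs hsum a
  exact (Finset.single_le_sum (f := fun b ↦ x b s) (fun b _ ↦ hxs b) (Finset.mem_univ a)).trans hsum

lemma intervalIntegrable_mul (hx : IsAllocation T k x) (hT : 0 ≤ T) {f : ℝ → ℝ}
    (hf : IntervalIntegrable f volume 0 T) (a : ι) :
    IntervalIntegrable (fun s ↦ f s * x a s) volume 0 T := by
  rw [intervalIntegrable_iff_integrableOn_Icc_of_le hT] at hf ⊢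
  refine Integrable.mul_bdd (c := k) hf (hx.measurable a).aestronglyMeasurable ?_
  filter_upwards [hx.nonneg, hx.ae_le] with s hxs hxk
  rw [norm_of_nonneg (hxs a)]
  exact hxk a

lemma monotoneOn_accrued (hx : IsAllocation T k x) (hv : IsUnitValuation T v) (hT : 0 ≤ T) (a : ι) :
    MonotoneOn (accrued v x a) (Set.Icc 0 T) := by
  refine monotoneOn_integral_of_ae_nonneg
    (hx.intervalIntegrable_mul hT (hv.intervalIntegrable a) a) ?_
  filter_upwards [hv.nonneg a, hx.nonneg] with s hvs hxs using mul_nonneg hvs (hxs a)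

lemma accrued_sub_le (hx : IsAllocation T k x) (hv : IsUnitValuation T v) {t : ℝ}
    (ht : t ∈ Set.Icc 0 T) (a : ι) :
    accrued v x a T - accrued v x a t ≤ k * (1 - ∫ s in (0 : ℝ)..t, v a s) := by
  have hT : 0 ≤ T := ht.1.trans ht.2
  have hTT : T ∈ Set.Icc 0 T := Set.right_mem_Icc.2 hT
  have hvx := hx.intervalIntegrable_mul hT (hv.intervalIntegrable a) a
  have hkv := (hv.intervalIntegrable a).const_mul k
  have hmono : MonotoneOn (fun t ↦ ∫ s in (0 : ℝ)..t, (k * v a s - v a s * x a s))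
      (Set.Icc 0 T) := by
    refine monotoneOn_integral_of_ae_nonneg (hkv.sub hvx) ?_
    filter_upwards [hv.nonneg a, hx.ae_le] with s hvs hxs
    linarith [mul_le_mul_of_nonneg_left (hxs a) hvs]
  have hsplit {r : ℝ} (hr : r ∈ Set.Icc 0 T) :
      ∫ s in (0 : ℝ)..r, (k * v a s - v a s * x a s) =
        k * (∫ s in (0 : ℝ)..r, v a s) - accrued v x a r := by
    have hsub : Set.uIcc 0 r ⊆ Set.uIcc 0 T := by
      rw [Set.uIcc_of_le hr.1, Set.uIcc_of_le hT]
      exact Set.Icc_subset_Icc_right hr.2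
    rw [intervalIntegral.integral_sub (hkv.mono_set hsub) (hvx.mono_set hsub),
      intervalIntegral.integral_const_mul, accrued]
  have hle := hmono ht hTT ht.2
  simp only [hsplit ht, hsplit hTT, hv.integral_eq_one] at hle
  linarith

lemma accrued_nonneg (hx : IsAllocation T k x) (hv : IsUnitValuation T v) {t : ℝ}
    (ht : t ∈ Set.Icc 0 T) (a : ι) : 0 ≤ accrued v x a t := by
  have hT : 0 ≤ T := ht.1.trans ht.2
  simpa [accrued] using hx.monotoneOn_accrued hv hT a (Set.left_mem_Icc.2 hT) ht ht.1

lemma accrued_le (hx : IsAllocation T k x) (hv : IsUnitValuation T v) {t : ℝ}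
    (ht : t ∈ Set.Icc 0 T) (a : ι) : accrued v x a t ≤ k := by
  have hT : 0 ≤ T := ht.1.trans ht.2
  calc accrued v x a t ≤ accrued v x a T :=
        hx.monotoneOn_accrued hv hT a ht (Set.right_mem_Icc.2 hT) ht.2
    _ ≤ k := by simpa [accrued] using hx.accrued_sub_le hv (Set.left_mem_Icc.2 hT) a

lemma utility_pos (hx : IsAllocation T k x) (hv : IsUnitValuation T v) (hκ : 0 < κ) {t : ℝ}
    (ht : t ∈ Set.Icc 0 T) (a : ι) : 0 < utility κ v x a t :=
  add_pos_of_pos_of_nonneg hκ (hx.accrued_nonneg hv ht a)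

lemma ae_hasDerivAt_utility (hx : IsAllocation T k x) (hv : IsUnitValuation T v) (hT : 0 ≤ T)
    (a : ι) : ∀ᵐ s ∂volume.restrict (Set.Icc 0 T),
      HasDerivAt (utility κ v x a) (v a s * x a s) s := by
  filter_upwards [ae_restrict_hasDerivAt_integral hT
    (hx.intervalIntegrable_mul hT (hv.intervalIntegrable a) a)] with s hs using hs.const_add κ

end IsAllocation

lemma IsNashianGreedy.sum_mul_div_le {U z : ι → ℝ → ℝ} (hx : IsNashianGreedy T v U x)
    (hv : IsUnitValuation T v) (hU : ∀ s ∈ Set.Icc 0 T, ∀ a, 0 < U a s)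
    (hxy : ∀ᵐ s ∂volume.restrict (Set.Icc 0 T), ∀ a, x a s ≤ y a s) (hz : IsAllocation T 1 z) :
    ∀ᵐ s ∂volume.restrict (Set.Icc 0 T),
      ∑ a, v a s * z a s / U a s ≤ ∑ a, v a s * y a s / U a s := by
  filter_upwards [ae_all_iff.2 hv.nonneg, hx.nonneg, hx.sum_eq_one, hx.greedy, hxy, hz.nonneg,
    hz.sum_le, ae_restrict_mem measurableSet_Icc] with s hvs hxs hx1 hgreedy hxys hzs hz1 hs
  have hw (a : ι) : 0 ≤ v a s / U a s := div_nonneg (hvs a) (hU s hs a).le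
  have hmax (a b : ι) (ha : 0 < x a s) : v b s / U b s ≤ v a s / U a s :=
    (div_le_div_iff₀ (hU s hs b) (hU s hs a)).2 (hgreedy a b ha)
  simp only [mul_div_right_comm]
  exact (sum_mul_le_sum_mul_of_supported_on_max hw hxs hx1 hmax hzs hz1).trans
    (Finset.sum_le_sum fun a _ ↦ mul_le_mul_of_nonneg_left (hxys a) (hw a))

lemma IsNashianGreedy.sum_accrued_div_utility_le {z : ι → ℝ → ℝ}
    (hx : IsNashianGreedy T v (utility κ v y) x) (hv : IsUnitValuation T v) (hκ : 0 < κ)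
    (hy : IsAllocation T k y) (hxy : ∀ᵐ s ∂volume.restrict (Set.Icc 0 T), ∀ a, x a s ≤ y a s)
    (hz : IsAllocation T 1 z) {t : ℝ} (ht : t ∈ Set.Icc 0 T) :
    ∑ a, accrued v z a t / utility κ v y a t ≤ Fintype.card ι * log (1 + k / κ) := by
  have hT : 0 ≤ T := ht.1.trans ht.2
  have hsub : Set.Icc 0 t ⊆ Set.Icc 0 T := Set.Icc_subset_Icc_right ht.2
  have restrict {P : ℝ → Prop} (h : ∀ᵐ s ∂volume.restrict (Set.Icc 0 T), P s) :
      ∀ᵐ s ∂volume.restrict (Set.Icc 0 t), P s := ae_restrict_of_ae_restrict_of_subset hsub h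
  have hinit (a : ι) : utility κ v y a 0 = κ := by simp [utility, accrued]
  have hlog (a : ι) : log (utility κ v y a t) - log (utility κ v y a 0) ≤ log (1 + k / κ) := by
    have hu := hy.utility_pos hv hκ ht a
    rw [hinit, ← log_div hu.ne' hκ.ne', ← div_self hκ.ne', ← add_div]
    gcongr
    exact add_le_add_right (hy.accrued_le hv ht a) κ
  calc ∑ a, accrued v z a t / utility κ v y a t ≤
        ∑ a, (log (utility κ v y a t) - log (utility κ v y a 0)) := by
        refine sum_integral_div_le_sum_log_sub_log ht.1
          (fun a ↦ ((hy.monotoneOn_accrued hv hT a).mono hsub).const_add κ)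
          (fun a ↦ (hκ.trans_eq (hinit a).symm))
          (fun a ↦ restrict (hy.ae_hasDerivAt_utility hv hT a)) (fun a ↦ ?_) (fun a ↦ ?_)
          (restrict (hx.sum_mul_div_le hv (fun s hs ↦ hy.utility_pos hv hκ hs) hxy hz))
        · refine (hz.intervalIntegrable_mul hT (hv.intervalIntegrable a) a).mono_set ?_
          rwa [Set.uIcc_of_le ht.1, Set.uIcc_of_le hT]
        · filter_upwards [restrict (hv.nonneg a), restrict hz.nonneg] with s hvs hzs
          exact mul_nonneg hvs (hzs a)
    _ ≤ ∑ _a : ι, log (1 + k / κ) := Finset.sum_le_sum fun a _ ↦ hlog a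
    _ = Fintype.card ι * log (1 + k / κ) := by simp

/-- A poorest agent that receives a share of at least `1 / Φ` gains at least as much utility as its
regularizer loses. -/
lemma IsEgalitarianGreedy.le_utility {θ : ℝ}
    (hx : IsEgalitarianGreedy T (fun a t ↦ utility κ v y a t + regularizer Φ v a t) x)
    (hv : IsUnitValuation T v) (hT : 0 ≤ T) (hy : IsAllocation T k y)
    (hxy : ∀ᵐ s ∂volume.restrict (Set.Icc 0 T), ∀ a, x a s ≤ y a s) (hθ : θ ≤ κ + 1 / Φ)
    (hcard : ∀ t ∈ Set.Icc 0 T,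
      ({a | utility κ v y a t + regularizer Φ v a t < θ} : Finset ι).card < Φ) (a : ι) :
    θ ≤ utility κ v y a T := by
  set W : ι → ℝ → ℝ := fun a t ↦ utility κ v y a t + regularizer Φ v a t with hW
  have hvy (a : ι) := hy.intervalIntegrable_mul hT (hv.intervalIntegrable a) a
  have hW0 (a : ι) : θ ≤ W a 0 := by simpa [hW, utility, accrued, regularizer] using hθ
  have hWT : W a T = utility κ v y a T := by simp only [hW, hv.regularizer_end, add_zero]
  have hWAC (a : ι) : AbsolutelyContinuousOnInterval (W a) 0 T := by
    have hconst (c : ℝ) : AbsolutelyContinuousOnInterval (fun _ ↦ c) 0 T :=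
      (LipschitzWith.const c).lipschitzOnWith.absolutelyContinuousOnInterval
    have hintegral {f : ℝ → ℝ} (hf : IntervalIntegrable f volume 0 T) :
        AbsolutelyContinuousOnInterval (fun t ↦ ∫ s in (0 : ℝ)..t, f s) 0 T :=
      hf.absolutelyContinuousOnInterval_intervalIntegral Set.left_mem_uIcc
    exact ((hconst κ).add (hintegral (hvy a))).add
      (((hconst 1).sub (hintegral (hv.intervalIntegrable a))).const_mul (1 / Φ))
  have hderiv (a : ι) : ∀ᵐ s ∂volume.restrict (Set.Icc 0 T),
      HasDerivAt (W a) (v a s * (y a s - 1 / Φ)) s := by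
    filter_upwards [hy.ae_hasDerivAt_utility hv hT a,
      ae_restrict_hasDerivAt_integral hT (hv.intervalIntegrable a)] with s hus hvs
    convert! hus.add ((hvs.const_sub 1).const_mul (1 / Φ)) using 1
    ring
  rw [← hWT]
  refine forall_le_of_exists_minimizer_deriv_nonneg hT hWAC hW0 ?_ a
  filter_upwards [ae_all_iff.2 hv.nonneg, hx.nonneg, hx.sum_eq_one, hx.greedy, hxy,
    ae_all_iff.2 hderiv, ae_restrict_mem measurableSet_Icc]
    with s hvs hxs hx1 hgreedy hxys hWs hs hlow
  obtain ⟨b, hbmin, hb⟩ := exists_minimizer_one_div_le_of_card_lt hxs hx1 hgreedy hlow (hcard s hs)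
  refine ⟨b, hbmin, ?_⟩
  rw [(hWs b).deriv]
  exact mul_nonneg (hvs b) (sub_nonneg.2 (hb.trans (hxys b)))

lemma IsEgalitarianGreedy.exists_le_utility_of_sum_div_le {p : ℝ} {z : ι → ℝ → ℝ}
    (hx : IsEgalitarianGreedy T (fun a t ↦ utility κ v y a t + regularizer Φ v a t) x)
    (hv : IsUnitValuation T v) (hT : 0 ≤ T) (hy : IsAllocation T k y)
    (hxy : ∀ᵐ s ∂volume.restrict (Set.Icc 0 T), ∀ a, x a s ≤ y a s) (hz : IsAllocation T 1 z)
    (hz0 : ∀ a, 0 < accrued v z a T) (hp : p < 0) (hκ : 0 < κ) (hΦ : 0 < Φ)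
    (hΦcard : Φ ≤ 2 * Fintype.card ι)
    (hratio : ∀ t ∈ Set.Icc 0 T, ∑ a, accrued v z a t / utility κ v y a t ≤ 2 * Φ ^ 2) :
    ∃ θ, 0 < θ ∧ (∀ a, θ ≤ utility κ v y a T) ∧
      ∑ a, (accrued v z a T / (6 * Φ)) ^ p = Φ / 2 * θ ^ p := by
  have hf0 (a : ι) : 0 < accrued v z a T / (6 * Φ) := div_pos (hz0 a) (by positivity)
  have hf1 (a : ι) : accrued v z a T / (6 * Φ) ≤ 1 / (6 * Φ) := by
    gcongr
    exact hz.accrued_le hv (Set.right_mem_Icc.2 hT) a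
  obtain ⟨θ, hθ, hθ1, hlevel⟩ :=
    exists_sum_rpow_eq_mul_rpow hp (half_pos hΦ) (by linarith) hf0 hf1
  have hinit : θ ≤ κ + 1 / Φ := by
    have : 1 / (6 * Φ) ≤ 1 / Φ := one_div_le_one_div_of_le hΦ (by linarith)
    linarith
  have hoffered {t : ℝ} (ht : t ∈ Set.Icc 0 T) (a : ι) :
      Φ * (6 * (accrued v z a T / (6 * Φ)) - regularizer Φ v a t) ≤ accrued v z a t := by
    have hexpand : Φ * (6 * (accrued v z a T / (6 * Φ)) - regularizer Φ v a t) =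
        accrued v z a T - 1 * (1 - ∫ s in (0 : ℝ)..t, v a s) := by
      rw [regularizer]
      field_simp
    linarith [hz.accrued_sub_le hv ht a]
  refine ⟨θ, hθ, hx.le_utility hv hT hy hxy hinit fun t ht ↦ ?_, hlevel⟩
  exact card_add_lt_of_sum_div_le hp.le hθ hΦ (hy.utility_pos hv hκ ht)
    (hv.regularizer_nonneg hΦ.le ht) hf0 (hz.accrued_nonneg hv ht) (hoffered ht) (hratio t ht)
    hlevel.le

theorem pMean_accrued_div_le_pMean_utility {p : ℝ} {xN xE z : ι → ℝ → ℝ}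
    (hxN : IsNashianGreedy T v (utility κ v (xN + xE)) xN)
    (hxE : IsEgalitarianGreedy T
      (fun a t ↦ utility κ v (xN + xE) a t + regularizer Φ v a t) xE)
    (hv : IsUnitValuation T v) (hT : 0 ≤ T) (hz : IsAllocation T 1 z)
    (hz0 : ∀ a, 0 < accrued v z a T) (hp : p ≤ -1) (hκ : 0 < κ) (hΦ : 0 < Φ)
    (hΦcard : Φ ≤ 2 * Fintype.card ι) (hΦlog : Fintype.card ι * log (1 + 2 / κ) ≤ 2 * Φ ^ 2) :
    pMean p (accrued v z · T) / (12 * Φ) ≤ pMean p (utility κ v (xN + xE) · T) := by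
  have hTT : T ∈ Set.Icc 0 T := Set.right_mem_Icc.2 hT
  have hp0 : p < 0 := by linarith
  have : Nonempty ι := Fintype.card_pos_iff.1 (Nat.cast_pos (α := ℝ).1 (by linarith))
  have hy : IsAllocation T 2 (xN + xE) := one_add_one_eq_two (R := ℝ) ▸ hxN.add hxE.toIsAllocation
  have hNy : ∀ᵐ s ∂volume.restrict (Set.Icc 0 T), ∀ a, xN a s ≤ (xN + xE) a s :=
    hxE.nonneg.mono fun s hs a ↦ le_add_of_nonneg_right (hs a)
  have hEy : ∀ᵐ s ∂volume.restrict (Set.Icc 0 T), ∀ a, xE a s ≤ (xN + xE) a s :=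
    hxN.nonneg.mono fun s hs a ↦ le_add_of_nonneg_left (hs a)
  have hnash (t : ℝ) (ht : t ∈ Set.Icc 0 T) :
      ∑ a, accrued v z a t / utility κ v (xN + xE) a t ≤ 2 * Φ ^ 2 :=
    (hxN.sum_accrued_div_utility_le hv hκ hy hNy hz ht).trans hΦlog
  obtain ⟨θ, hθ, hfloor, hlevel⟩ :=
    hxE.exists_le_utility_of_sum_div_le hv hT hy hEy hz hz0 hp0 hκ hΦ hΦcard hnash
  have hratio : ∑ a, accrued v z a T / (6 * Φ) / utility κ v (xN + xE) a T ≤ Φ / 2 := by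
    simp only [div_right_comm _ (6 * Φ), ← Finset.sum_div]
    rw [div_le_iff₀ (by positivity)]
    nlinarith [hnash T hTT]
  have hsum := sum_rpow_le_sum_half_rpow hp hθ hfloor (fun a ↦ div_pos (hz0 a) (by positivity))
    hlevel hratio
  calc pMean p (accrued v z · T) / (12 * Φ) = pMean p (fun a ↦ accrued v z a T / (6 * Φ) / 2) := by
        simp only [div_div, mul_comm _ (2 : ℝ), ← mul_assoc]
        rw [pMean_div_const hp0.ne (by positivity) fun a ↦ (hz0 a).le]
        norm_num
    _ ≤ pMean p (utility κ v (xN + xE) · T) :=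
        pMean_le_pMean_of_sum_rpow_le hp0 (hy.utility_pos hv hκ hTT) hsum

end MixedGreedy

lemma log_one_add_two_mul_le {x : ℝ} (hx : 0 ≤ x) : log (1 + 2 * x) ≤ 2 * log (x + 1) :=
  calc log (1 + 2 * x) ≤ log ((x + 1) ^ 2) := log_le_log (by positivity) (by nlinarith)
    _ = 2 * log (x + 1) := by rw [log_pow, Nat.cast_ofNat]

lemma sqrt_mul_log_add_one_le {x : ℝ} (hx : 0 ≤ x) : √(x * log (x + 1)) ≤ x := by
  refine sqrt_le_iff.2 ⟨hx, ?_⟩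
  rw [sq]
  gcongr
  linarith [log_le_sub_one_of_pos (by positivity : 0 < x + 1)]

theorem stmt_11 :
    ∃ c : ℝ, 0 < c ∧
    ∀ (n : ℕ), 2 ≤ n → ∀ (T : ℝ), 0 < T →
    ∀ (v : Fin n → ℝ → ℝ),
      (∀ a, Measurable (v a)) →
      (∀ a, ∀ᵐ s ∂(volume.restrict (Set.Icc (0:ℝ) T)), 0 ≤ v a s) →
      (∀ a, IntegrableOn (v a) (Set.Icc (0:ℝ) T)) →
      (∀ a, ∫ s in (0:ℝ)..T, v a s = 1) →
    ∀ (p : ℝ), p ≤ -1 →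
    ∀ (xN xE : Fin n → ℝ → ℝ),
      (∀ a, Measurable (xN a)) → (∀ a, Measurable (xE a)) →
      (∀ᵐ s ∂(volume.restrict (Set.Icc (0:ℝ) T)),
        (∀ a, 0 ≤ xN a s) ∧ (∀ a, 0 ≤ xE a s) ∧
        (∑ a, xN a s = 1) ∧ (∑ a, xE a s = 1)) →
    ∀ (U : Fin n → ℝ → ℝ),
      (∀ a t, U a t =
        1 / (n : ℝ) + ∫ s in (0:ℝ)..t, v a s * (xN a s + xE a s)) →
    ∀ (R : Fin n → ℝ → ℝ),
      (∀ a t, R a t = (1 / Real.sqrt ((n : ℝ) * Real.log ((n : ℝ) + 1))) *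
        (1 - ∫ s in (0:ℝ)..t, v a s)) →
      (∀ᵐ s ∂(volume.restrict (Set.Icc (0:ℝ) T)),
        ∀ a b, 0 < xN a s → v a s * U b s ≥ v b s * U a s) →
      (∀ᵐ s ∂(volume.restrict (Set.Icc (0:ℝ) T)),
        ∀ a, 0 < xE a s → ∀ b, U a s + R a s ≤ U b s + R b s) →
    ∀ (xstar : Fin n → ℝ → ℝ),
      (∀ a, Measurable (xstar a)) →
      (∀ᵐ s ∂(volume.restrict (Set.Icc (0:ℝ) T)),
        (∀ a, 0 ≤ xstar a s) ∧ ∑ a, xstar a s ≤ 1) →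
    ∀ (Ustar : Fin n → ℝ),
      (∀ a, Ustar a = ∫ s in (0:ℝ)..T, v a s * xstar a s) →
      (∀ a, 0 < Ustar a) →
    ((1 / (n : ℝ)) * ∑ a, (U a T) ^ p) ^ (1 / p) ≥
      c * ((1 / (n : ℝ)) * ∑ a, (Ustar a) ^ p) ^ (1 / p) /
        Real.sqrt ((n : ℝ) * Real.log ((n : ℝ) + 1)) := by
  refine ⟨1 / 12, by norm_num, fun n hn T hT v _ hv0 hvint hv1 p hp xN xE hxN hxE hx U hU R hR
    hnash hegal xstar hxm hxs Ustar hUstar hpos ↦ ?_⟩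
  obtain rfl : U = utility (1 / n) v (xN + xE) := funext₂ hU
  obtain rfl : R = regularizer √(n * log (n + 1)) v := funext₂ hR
  obtain rfl : Ustar = (accrued v xstar · T) := funext hUstar
  simp only [Filter.eventually_and] at hx hxs
  obtain ⟨hN0, hE0, hN1, hE1⟩ := hx
  have hn0 : (0 : ℝ) < n := by positivity
  have hlog : 0 < log ((n : ℝ) + 1) := log_pos (by linarith)
  have hsqrt := sqrt_mul_log_add_one_le hn0.le
  have hval : IsUnitValuation T v :=
    ⟨hv0, fun a ↦ (intervalIntegrable_iff_integrableOn_Icc_of_le hT.le).2 (hvint a), hv1⟩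
  have hmain := pMean_accrued_div_le_pMean_utility (p := p)
    ⟨⟨hxN, hN0, hN1.mono fun _ h ↦ h.le⟩, hN1, hnash⟩
    ⟨⟨hxE, hE0, hE1.mono fun _ h ↦ h.le⟩, hE1, hegal⟩
    hval hT.le ⟨hxm, hxs.1, hxs.2⟩ hpos hp (one_div_pos.2 hn0) (sqrt_pos.2 (by positivity))
    (by rw [Fintype.card_fin]; linarith) ?_
  · simp only [pMean, Fintype.card_fin] at hmain
    rwa [ge_iff_le, one_div_mul_eq_div, div_div]
  · rw [Fintype.card_fin, sq_sqrt (by positivity), div_div_eq_mul_div, div_one]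
    linarith [mul_le_mul_of_nonneg_left (log_one_add_two_mul_le hn0.le) hn0.le]
end

section
/- (Hardness for the Nashian and positive regimes.) There exist a constant c > 0 and n₀ ∈ ℕ such that for every n ≥ n₀ and every deterministic online algorithm A for n agents: (i) for every real p with log(log n)/log n ≤ p ≤ 1 there exists an instance v with unit monopolist utilities, in which for every item k there is some w_k ≥ 0 with v k a ∈ {0, w_k} for all agents a, such that OPT_p(v) ≥ (c/p) · ALG_{A,p}(v); (ii) for every real p ≤ 1 with p < log(log n)/log n and p ≠ 0, there exists such an instance with OPT_p(v) ≥ c · (log n / log(log n)) · ALG_{A,p}(v). -/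
/-!
Let `L` be an integer with `1 ≤ L ≤ log n / log (log n)` and let `p ≤ 1 / L`, `p ≠ 0`. Against every
online algorithm there is an instance with gap of order `L`, and the two parts of the theorem are
the cases `L = ⌊1 / p⌋` and `L = ⌊log n / log (log n)⌋`.

The adversary works with `K ≥ L ^ 2` blocks of agents. A block of height `h` has `h * 2 ^ h` members
and receives one item, worth `1 / L` to each of them. The `2 ^ h` members with the smallest total
utility so far are dropped and get the label `h`; offline, they share the item among themselves. The
other `(h - 1) * 2 ^ h` members form two blocks of height `h - 1`, which are treated recursively,
starting from height `L`. The algorithm does not know who is going to be dropped and loses a factor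
of order `g` on the average over label `g`. Each time, one further item, which is not used offline,
completes the monopolist utilities of all agents dropped at the same height; since `K ≥ L ^ 2`, it
is of no significant help to the algorithm. The fewer than `L * 2 ^ L` agents outside the blocks
receive one private item each and the label `0`.

Every label `g ∈ [1, L]` is thus carried by the same number of agents, and on it the offline utility
is `g / 2` times the bound on the algorithm's average. By concavity the algorithm does best in the
`p`-mean when its utility is constant on each label. By `1 + p log x ≤ x ^ p` the comparison then
reduces to weighted sums of `log (L / g)`, where `∑ g, log (L / g) ≤ L`. For `0 < p ≤ 1 / L` the
weights agree up to a factor `8`; for `p < 0` they are oppositely ordered to `log (L / g)`, so that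
Chebyshev's sum inequality applies.
-/

open Real

/-- The `p`-mean welfare of a utility profile, taken to be `0` when `p < 0`
and some utility is zero. -/
noncomputable def pMeanWelfare (n : ℕ) (p : ℝ) (u : Fin n → ℝ) : ℝ :=
  if p < 0 ∧ ∃ a, u a = 0 then 0
  else ((1 / (n : ℝ)) * ∑ a, u a ^ p) ^ (1 / p)

/-- The optimal `p`-mean welfare over all feasible (fractional) allocations. -/
noncomputable def OPTwelfare (n m : ℕ) (p : ℝ) (v : Fin m → Fin n → ℝ) : ℝ :=
  sSup { w : ℝ | ∃ y : Fin m → Fin n → ℝ,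
    (∀ k a, 0 ≤ y k a) ∧ (∀ k, ∑ a, y k a ≤ 1) ∧
    w = pMeanWelfare n p (fun a => ∑ k, v k a * y k a) }

/-- The utilities produced by a deterministic online algorithm `A` on instance `v`:
item `k` is allocated according to `A k` applied to the value history of items `0,…,k`. -/
noncomputable def onlineUtilities (n m : ℕ)
    (A : (k : ℕ) → (Fin (k + 1) → Fin n → ℝ) → (Fin n → ℝ))
    (v : Fin m → Fin n → ℝ) : Fin n → ℝ :=
  fun a => ∑ k : Fin m, v k a *
    A k.1 (fun i : Fin (k.1 + 1) => v (Fin.castLE k.isLt i)) a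

/-- The `p`-mean welfare achieved by the online algorithm `A` on instance `v`. -/
noncomputable def ALGwelfare (n m : ℕ) (p : ℝ)
    (A : (k : ℕ) → (Fin (k + 1) → Fin n → ℝ) → (Fin n → ℝ))
    (v : Fin m → Fin n → ℝ) : ℝ :=
  pMeanWelfare n p (onlineUtilities n m A v)

section PMean

variable {n : ℕ} {p : ℝ} {u v : Fin n → ℝ}

theorem pMeanWelfare_nonneg (hu : ∀ a, 0 ≤ u a) : 0 ≤ pMeanWelfare n p u := by
  have hsum : 0 ≤ ∑ a, u a ^ p := Finset.sum_nonneg fun a _ => rpow_nonneg (hu a) p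
  unfold pMeanWelfare
  split_ifs <;> positivity

theorem pMeanWelfare_const_mul {κ : ℝ} (hκ : 0 < κ) (hp : p ≠ 0) (hu : ∀ a, 0 ≤ u a) :
    pMeanWelfare n p (fun a => κ * u a) = κ * pMeanWelfare n p u := by
  have hsum : 0 ≤ ∑ a, u a ^ p := Finset.sum_nonneg fun a _ => rpow_nonneg (hu a) p
  simp only [pMeanWelfare, mul_eq_zero, hκ.ne', false_or, mul_ite, mul_zero]
  congr 1
  simp only [mul_rpow hκ.le (hu _), ← Finset.mul_sum, mul_left_comm _ (κ ^ p)]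
  rw [mul_rpow (by positivity) (by positivity), one_div p, rpow_rpow_inv hκ.le hp]

/- Dividing by `p` makes `x ↦ x ^ p / p` increasing and, for `p ≤ 1`, concave for either sign of
`p`. -/
theorem pMeanWelfare_le_of_sum_rpow_div_le (hp : p ≠ 0) (hu : ∀ a, 0 ≤ u a) (hv : ∀ a, 0 < v a)
    (h : (p < 0 → ∀ a, 0 < u a) → (∑ a, u a ^ p) / p ≤ (∑ a, v a ^ p) / p) :
    pMeanWelfare n p u ≤ pMeanWelfare n p v := by
  rcases isEmpty_or_nonempty (Fin n) with _ | _
  · rw [Subsingleton.elim u v]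
  by_cases hzero : p < 0 ∧ ∃ a, u a = 0
  · simpa only [pMeanWelfare, if_pos hzero] using pMeanWelfare_nonneg (p := p) fun a => (hv a).le
  have hu_sum : 0 ≤ ∑ a, u a ^ p := Finset.sum_nonneg fun a _ => rpow_nonneg (hu a) p
  have hv_sum : 0 < ∑ a, v a ^ p :=
    Finset.sum_pos (fun a _ => rpow_pos_of_pos (hv a) p) Finset.univ_nonempty
  have hn : 0 < n := Fin.pos_iff_nonempty.2 ‹_›
  have hsum := h fun hp' a => (hu a).lt_of_ne fun ha => hzero ⟨hp', a, ha.symm⟩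
  rw [pMeanWelfare, if_neg hzero, pMeanWelfare, if_neg fun h => (hv h.2.choose).ne' h.2.choose_spec]
  rcases hp.lt_or_gt with hp | hp
  · rw [div_le_div_right_of_neg hp] at hsum
    exact rpow_le_rpow_of_nonpos (by positivity) (by gcongr) (one_div_nonpos.2 hp.le)
  · rw [div_le_div_iff_of_pos_right hp] at hsum
    gcongr

theorem pMeanWelfare_mono (hp : p ≠ 0) (hu : ∀ a, 0 ≤ u a) (hv : ∀ a, 0 < v a)
    (huv : ∀ a, u a ≤ v a) : pMeanWelfare n p u ≤ pMeanWelfare n p v := by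
  refine pMeanWelfare_le_of_sum_rpow_div_le hp hu hv fun hu' => ?_
  rcases hp.lt_or_gt with hp | hp
  · rw [div_le_div_right_of_neg hp]
    exact Finset.sum_le_sum fun a _ => rpow_le_rpow_of_nonpos (hu' hp a) (huv a) hp.le
  · gcongr with a
    exacts [hu a, huv a]

theorem one_add_mul_log_le_rpow {x : ℝ} (hx : 0 < x) (p : ℝ) : 1 + p * log x ≤ x ^ p := by
  rw [rpow_def_of_pos hx, add_comm, mul_comm]
  exact add_one_le_exp _

theorem rpow_div_le_tangent {x t : ℝ} (hp : p ≠ 0) (hp1 : p ≤ 1) (hx : 0 ≤ x)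
    (hx' : p < 0 → 0 < x) (ht : 0 < t) : x ^ p / p ≤ t ^ p / p + t ^ p / t * (x - t) := by
  have hscale : x ^ p = t ^ p * (x / t) ^ p := by
    rw [← mul_rpow ht.le (by positivity), mul_div_cancel₀ _ ht.ne']
  have htangent : t ^ p / p + t ^ p / t * (x - t) = t ^ p * (1 + p * (x / t - 1)) / p := by
    field_simp
  rw [hscale, htangent]
  rcases hp.lt_or_gt with hneg | hpos
  · have hxt : 0 < x / t := div_pos (hx' hneg) ht
    have hlog : p * (x / t - 1) ≤ p * log (x / t) :=
      mul_le_mul_of_nonpos_left (log_le_sub_one_of_pos hxt) hneg.le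
    rw [div_le_div_right_of_neg hneg]
    gcongr
    linarith [one_add_mul_log_le_rpow hxt p]
  · gcongr
    have hxt : -1 ≤ x / t - 1 := by linarith [div_nonneg hx ht.le]
    simpa only [add_sub_cancel] using rpow_one_add_le_one_add_mul_self hxt hpos.le hp1

theorem pMeanWelfare_le_of_sum_fiber_le {ι : Type*} [DecidableEq ι] {lab : Fin n → ι} {t : ι → ℝ}
    (hp : p ≠ 0) (hp1 : p ≤ 1) (hu : ∀ a, 0 ≤ u a) (ht : ∀ i, 0 < t i)
    (hfiber : ∀ i, ∑ a with lab a = i, u a ≤ ∑ a with lab a = i, t (lab a)) :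
    pMeanWelfare n p u ≤ pMeanWelfare n p (t ∘ lab) := by
  refine pMeanWelfare_le_of_sum_rpow_div_le hp hu (fun a => ht _) fun hu' => ?_
  have hdev : ∑ a, t (lab a) ^ p / t (lab a) * (u a - t (lab a)) ≤ 0 := by
    rw [← Finset.sum_fiberwise_of_maps_to fun a _ =>
      Finset.mem_image_of_mem lab (Finset.mem_univ a)]
    refine Finset.sum_nonpos fun i _ => ?_
    calc ∑ a with lab a = i, t (lab a) ^ p / t (lab a) * (u a - t (lab a))
        = t i ^ p / t i * ∑ a with lab a = i, (u a - t (lab a)) := by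
          rw [Finset.mul_sum]
          refine Finset.sum_congr rfl fun a ha => ?_
          rw [(Finset.mem_filter.1 ha).2]
      _ ≤ 0 := by
          have hti := ht i
          rw [Finset.sum_sub_distrib]
          exact mul_nonpos_of_nonneg_of_nonpos (by positivity) (sub_nonpos.2 (hfiber i))
  calc (∑ a, u a ^ p) / p
      ≤ ∑ a, (t (lab a) ^ p / p + t (lab a) ^ p / t (lab a) * (u a - t (lab a))) := by
        rw [Finset.sum_div]
        exact Finset.sum_le_sum fun a _ =>
          rpow_div_le_tangent hp hp1 (hu a) (fun h => hu' h a) (ht _)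
    _ ≤ (∑ a, (t ∘ lab) a ^ p) / p := by
        rw [Finset.sum_add_distrib, ← Finset.sum_div]
        exact add_le_of_nonpos_right hdev

theorem sum_rpow_le_sum_rpow_of_log {ι : Type*} {s : Finset ι} {x y : ι → ℝ}
    (hx : ∀ i ∈ s, 0 < x i) (hy : ∀ i ∈ s, 0 < y i)
    (hlog : 0 ≤ p * ∑ i ∈ s, x i ^ p * log (y i / x i)) :
    ∑ i ∈ s, x i ^ p ≤ ∑ i ∈ s, y i ^ p :=
  calc ∑ i ∈ s, x i ^ p
      ≤ ∑ i ∈ s, x i ^ p + p * ∑ i ∈ s, x i ^ p * log (y i / x i) := le_add_of_nonneg_right hlog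
    _ = ∑ i ∈ s, x i ^ p * (1 + p * log (y i / x i)) := by
        rw [Finset.mul_sum, ← Finset.sum_add_distrib]
        exact Finset.sum_congr rfl fun i _ => by ring
    _ ≤ ∑ i ∈ s, y i ^ p := Finset.sum_le_sum fun i hi => by
        have hxi := hx i hi
        have hyi := hy i hi
        calc x i ^ p * (1 + p * log (y i / x i)) ≤ x i ^ p * (y i / x i) ^ p := by
              gcongr
              exact one_add_mul_log_le_rpow (by positivity) p
          _ = y i ^ p := by
              rw [← mul_rpow hxi.le (by positivity), mul_div_cancel₀ _ hxi.ne']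

theorem pMeanWelfare_le_of_log (hp : p ≠ 0) (hu : ∀ a, 0 < u a) (hv : ∀ a, 0 < v a)
    (hpos : 0 < p → 0 ≤ ∑ a, u a ^ p * log (v a / u a))
    (hneg : p < 0 → 0 ≤ ∑ a, v a ^ p * log (v a / u a)) :
    pMeanWelfare n p u ≤ pMeanWelfare n p v := by
  refine pMeanWelfare_le_of_sum_rpow_div_le hp (fun a => (hu a).le) hv fun _ => ?_
  rcases hp.lt_or_gt with hp | hp
  · rw [div_le_div_right_of_neg hp]
    refine sum_rpow_le_sum_rpow_of_log (fun a _ => hv a) (fun a _ => hu a) ?_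
    have hswap : ∀ a, log (u a / v a) = -log (v a / u a) := fun a => by
      rw [← log_inv, inv_div]
    simpa only [hswap, mul_neg, Finset.sum_neg_distrib, neg_mul] using
      mul_nonneg (neg_nonneg.2 hp.le) (hneg hp)
  · rw [div_le_div_iff_of_pos_right hp]
    exact sum_rpow_le_sum_rpow_of_log (fun a _ => hu a) (fun a _ => hv a)
      (mul_nonneg hp.le (hpos hp))

end PMean

section LogSums

variable {L : ℕ} {W : ℕ → ℝ}

theorem antitoneOn_log_div (L : ℕ) :
    AntitoneOn (fun g : ℕ => log ((L : ℝ) / g)) (Finset.Icc 1 L : Finset ℕ) := by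
  intro i hi j hj hij
  have hi0 : 0 < i := (Finset.mem_Icc.1 hi).1
  have hj0 : 0 < j := (Finset.mem_Icc.1 hj).1
  have hL0 : 0 < L := hj0.trans_le (Finset.mem_Icc.1 hj).2
  dsimp only
  gcongr

theorem log_div_nonneg {g : ℕ} (hg : g ∈ Finset.Icc 1 L) : 0 ≤ log ((L : ℝ) / g) := by
  obtain ⟨hg1, hgL⟩ := Finset.mem_Icc.1 hg
  have hg0 : (0 : ℝ) < g := by exact_mod_cast hg1
  exact log_nonneg ((one_le_div hg0).2 (by exact_mod_cast hgL))

/- The exponential of the left side is `L ^ L / L!`. -/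
theorem sum_log_div_le (L : ℕ) : ∑ g ∈ Finset.Icc 1 L, log ((L : ℝ) / g) ≤ L := by
  rcases L.eq_zero_or_pos with rfl | hL
  · simp
  have hne : ∀ g ∈ Finset.Icc 1 L, (L : ℝ) / g ≠ 0 := fun g hg => by
    have := (Finset.mem_Icc.1 hg).1
    positivity
  have hprod : ∏ g ∈ Finset.Icc 1 L, (L : ℝ) / g = (L : ℝ) ^ L / L.factorial := by
    rw [Finset.prod_div_distrib, Finset.prod_const, Nat.card_Icc, Nat.add_sub_cancel,
      ← Nat.cast_prod, ← Finset.prod_Ico_id_eq_factorial]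
    rfl
  rw [← log_prod hne, hprod, log_le_iff_le_exp (by positivity)]
  exact pow_div_factorial_le_exp _ (Nat.cast_nonneg L) L

theorem le_sum_mul_sub_log_of_mem_Icc
    (hW : ∀ g ∈ Finset.Icc 1 L, W g ∈ Set.Icc (1 / 8 : ℝ) 1) :
    (L : ℝ) ≤ ∑ g ∈ Finset.Icc 1 L, W g * (16 - log ((L : ℝ) / g)) :=
  calc (L : ℝ) ≤ L * 2 - ∑ g ∈ Finset.Icc 1 L, log ((L : ℝ) / g) := by
        linarith [sum_log_div_le L]
    _ = ∑ g ∈ Finset.Icc 1 L, (2 - log ((L : ℝ) / g)) := by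
        simp [Finset.sum_sub_distrib]
    _ ≤ ∑ g ∈ Finset.Icc 1 L, W g * (16 - log ((L : ℝ) / g)) := by
        refine Finset.sum_le_sum fun g hg => ?_
        obtain ⟨hlow, hup⟩ := hW g hg
        linarith [mul_le_mul_of_nonneg_right hup (log_div_nonneg hg)]

theorem le_sum_mul_sub_log_of_monotoneOn (hmono : MonotoneOn W (Finset.Icc 1 L : Finset ℕ))
    (hW : ∀ g ∈ Finset.Icc 1 L, 1 ≤ W g) :
    (L : ℝ) ≤ ∑ g ∈ Finset.Icc 1 L, W g * (16 - log ((L : ℝ) / g)) := by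
  rcases L.eq_zero_or_pos with rfl | hL
  · simp
  have hsum : (L : ℝ) ≤ ∑ g ∈ Finset.Icc 1 L, W g := by
    simpa using Finset.card_nsmul_le_sum (Finset.Icc 1 L) W 1 hW
  have hchebyshev : ∑ g ∈ Finset.Icc 1 L, W g * log ((L : ℝ) / g) ≤
      ∑ g ∈ Finset.Icc 1 L, W g := by
    have h := (hmono.antivaryOn (antitoneOn_log_div L)).card_mul_sum_le_sum_mul_sum
    rw [Nat.card_Icc, Nat.add_sub_cancel] at h
    refine le_of_mul_le_mul_left (h.trans ?_) (Nat.cast_pos.2 hL)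
    rw [mul_comm]
    exact mul_le_mul_of_nonneg_right (sum_log_div_le L) ((Nat.cast_nonneg L).trans hsum)
  simp only [mul_sub, Finset.sum_sub_distrib, ← Finset.sum_mul]
  linarith

end LogSums

theorem le_rpow_of_pow_le {b x p : ℝ} {L : ℕ} (hb0 : 0 < b) (hb : b ≤ 1) (hp : 0 ≤ p)
    (hpL : L * p ≤ 1) (h : b ^ L ≤ x) : b ≤ x ^ p :=
  calc b = b ^ (1 : ℝ) := (rpow_one b).symm
    _ ≤ b ^ (L * p) := rpow_le_rpow_of_exponent_ge hb0 hb hpL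
    _ = (b ^ L) ^ p := by rw [← rpow_natCast, ← rpow_mul hb0.le]
    _ ≤ x ^ p := by gcongr

section Labels

variable {n L g : ℕ} {p : ℝ}

/-- The offline utility of an agent with label `g` when the adversary uses items of value `1 / L`.
Label `0` stands for the agents who receive a private item. -/
noncomputable def offlineUtility (L g : ℕ) : ℝ := if g = 0 then 1 else 1 / (L * 2 ^ g)

/-- The bound on the average utility that the online algorithm achieves over the agents with label
`g`. -/
noncomputable def onlineAverage (L g : ℕ) : ℝ := if g = 0 then 1 else 2 / (L * g * 2 ^ g)

/-- The constant `c` in the welfare gap `c * L`. The `2` is the loss in `onlineAverage`; the `16`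
outweighs `∑ g, log (L / g) ≤ L` under weights that agree up to a factor `8`. -/
noncomputable def gapConstant : ℝ := exp (-16) / 2

theorem gapConstant_pos : 0 < gapConstant := by unfold gapConstant; positivity

theorem gapConstant_le_one : gapConstant ≤ 1 := by
  have : exp (-16) ≤ 1 := exp_le_one_iff.2 (by norm_num)
  unfold gapConstant
  linarith

theorem offlineUtility_pos (hL : 1 ≤ L) (g : ℕ) : 0 < offlineUtility L g := by
  unfold offlineUtility
  split_ifs <;> positivity

theorem onlineAverage_pos (hL : 1 ≤ L) (g : ℕ) : 0 < onlineAverage L g := by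
  unfold onlineAverage
  split_ifs <;> positivity

theorem offlineUtility_le_one (hL : 1 ≤ L) (g : ℕ) : offlineUtility L g ≤ 1 := by
  unfold offlineUtility
  split_ifs
  · rfl
  · have hL' : (1 : ℝ) ≤ L := by exact_mod_cast hL
    exact div_le_one_of_le₀ (one_le_mul_of_one_le_of_one_le hL' (one_le_pow₀ one_le_two))
      (by positivity)

theorem antitoneOn_offlineUtility (L : ℕ) :
    AntitoneOn (offlineUtility L) (Finset.Icc 1 L : Finset ℕ) := by
  intro i hi j hj hij
  have hi0 : 0 < i := (Finset.mem_Icc.1 hi).1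
  have hj0 : 0 < j := (Finset.mem_Icc.1 hj).1
  have hL0 : 0 < L := hj0.trans_le (Finset.mem_Icc.1 hj).2
  rw [offlineUtility, offlineUtility, if_neg hi0.ne', if_neg hj0.ne']
  gcongr
  norm_num

theorem log_offline_div_online (hg : g ∈ Finset.Icc 1 L) :
    log (offlineUtility L g / (gapConstant * L * onlineAverage L g)) = 16 - log ((L : ℝ) / g) := by
  have hg1 : 0 < g := (Finset.mem_Icc.1 hg).1
  have hL1 : 0 < L := hg1.trans_le (Finset.mem_Icc.1 hg).2
  have hratio : offlineUtility L g / (gapConstant * L * onlineAverage L g) = exp 16 / (L / g) := by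
    rw [offlineUtility, onlineAverage, if_neg hg1.ne', if_neg hg1.ne', gapConstant, exp_neg]
    field_simp
  rw [hratio, log_div (exp_ne_zero _) (by positivity), log_exp]

theorem neg_le_log_offline_div_online_zero (hL : 1 ≤ L) :
    -(L : ℝ) ≤ log (offlineUtility L 0 / (gapConstant * L * onlineAverage L 0)) := by
  have hL' : (0 : ℝ) < L := by exact_mod_cast hL
  have hlog := log_le_sub_one_of_pos (mul_pos gapConstant_pos hL')
  have hgap := mul_le_of_le_one_left hL'.le gapConstant_le_one
  rw [offlineUtility, onlineAverage, if_pos rfl, if_pos rfl, mul_one, one_div, log_inv]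
  linarith

theorem onlineAverage_rpow_mem_Icc (hp : 0 ≤ p) (hpL : L * p ≤ 1) (hg : g ∈ Finset.Icc 1 L) :
    onlineAverage L g ^ p ∈ Set.Icc (1 / 8 : ℝ) 1 := by
  obtain ⟨hg1, hgL⟩ := Finset.mem_Icc.1 hg
  have hL1 : 1 ≤ L := hg1.trans hgL
  have hg1' : (1 : ℝ) ≤ g := by exact_mod_cast hg1
  have hL1' : (1 : ℝ) ≤ L := by exact_mod_cast hL1
  have hgL' : (g : ℝ) ≤ L := by exact_mod_cast hgL
  have hLpow : (L : ℝ) ≤ 2 ^ L := by exact_mod_cast L.lt_two_pow_self.le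
  have hup : onlineAverage L g ≤ 1 := by
    rw [onlineAverage, if_neg (by omega)]
    calc 2 / (L * g * 2 ^ g : ℝ) ≤ 2 / (1 * 1 * 2 ^ 1) := by gcongr; norm_num
      _ = 1 := by norm_num
  have hlow : (1 / 8) ^ L ≤ onlineAverage L g := by
    rw [onlineAverage, if_neg (by omega)]
    calc (1 / 8 : ℝ) ^ L = 1 / (2 ^ L * 2 ^ L * 2 ^ L) := by
          rw [← mul_pow, ← mul_pow, one_div_pow]; norm_num
      _ ≤ 2 / (L * g * 2 ^ g) := by
          gcongr
          exacts [by norm_num, hgL'.trans hLpow, by norm_num]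
  exact ⟨le_rpow_of_pow_le (by norm_num) (by norm_num) hp hpL hlow,
    rpow_le_one (onlineAverage_pos hL1 g).le hup hp⟩

/-- A labelling of the agents in which the members of `B` carry the labels `1, …, h`, each of them
`c` times, and all other agents carry the label `0`. -/
structure IsLabelling (B : Finset (Fin n)) (h c : ℕ) (lab : Fin n → ℕ) : Prop where
  le : ∀ a, lab a ≤ h
  eq_zero_iff : ∀ a, lab a = 0 ↔ a ∉ B
  card_fiber : ∀ g ∈ Finset.Icc 1 h, (Finset.univ.filter (lab · = g)).card = c

namespace IsLabelling

variable {B : Finset (Fin n)} {h c K : ℕ} {lab : Fin n → ℕ}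

theorem sum_comp (hlab : IsLabelling B h c lab) (f : ℕ → ℝ) :
    ∑ a, f (lab a) = Bᶜ.card * f 0 + c * ∑ g ∈ Finset.Icc 1 h, f g := by
  have hlabels : Finset.range (h + 1) = insert 0 (Finset.Icc 1 h) := by
    ext g
    simp only [Finset.mem_range, Finset.mem_insert, Finset.mem_Icc]
    omega
  have hzero : Finset.univ.filter (lab · = 0) = Bᶜ := by
    ext a
    simp [hlab.eq_zero_iff]
  rw [← Finset.sum_fiberwise_of_maps_to' fun a _ => Finset.mem_range_succ_iff.2 (hlab.le a),
    hlabels, Finset.sum_insert (by simp)]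
  simp only [Finset.sum_const, nsmul_eq_mul, hzero, Finset.mul_sum]
  congr 1
  exact Finset.sum_congr rfl fun g hg => by rw [hlab.card_fiber g hg]

theorem sum_mul_log_nonneg (hlab : IsLabelling B L (K * 2 ^ L) lab) (hL : 1 ≤ L) (hK : L ≤ K)
    (hB : Bᶜ.card ≤ L * 2 ^ L) {W : ℕ → ℝ} (hW0 : W 0 = 1)
    (hW : (L : ℝ) ≤ ∑ g ∈ Finset.Icc 1 L, W g * (16 - log ((L : ℝ) / g))) :
    0 ≤ ∑ a, W (lab a) *
      log (offlineUtility L (lab a) / (gapConstant * L * onlineAverage L (lab a))) := by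
  rw [hlab.sum_comp fun g =>
    W g * log (offlineUtility L g / (gapConstant * L * onlineAverage L g)), hW0, one_mul,
    Finset.sum_congr rfl fun g hg => by rw [log_offline_div_online hg]]
  have hB' : (Bᶜ.card : ℝ) ≤ K * 2 ^ L := by exact_mod_cast hB.trans (by gcongr)
  have hblocks : (K * 2 ^ L : ℝ) * L ≤
      (K * 2 ^ L) * ∑ g ∈ Finset.Icc 1 L, W g * (16 - log ((L : ℝ) / g)) := by gcongr
  have houtside : (Bᶜ.card : ℝ) * -L ≤
      Bᶜ.card * log (offlineUtility L 0 / (gapConstant * L * onlineAverage L 0)) := by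
    gcongr
    exact neg_le_log_offline_div_online_zero hL
  have hcard : (Bᶜ.card : ℝ) * L ≤ K * 2 ^ L * L := by gcongr
  push_cast
  linarith

theorem gap_mul_pMeanWelfare_le (hlab : IsLabelling B L (K * 2 ^ L) lab) (hL : 1 ≤ L)
    (hK : L ≤ K) (hB : Bᶜ.card ≤ L * 2 ^ L) (hp : p ≠ 0) (hpL : L * p ≤ 1) :
    gapConstant * L * pMeanWelfare n p (onlineAverage L ∘ lab) ≤
      pMeanWelfare n p (offlineUtility L ∘ lab) := by
  have hgap : 0 < gapConstant * L := mul_pos gapConstant_pos (by exact_mod_cast hL)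
  have honline := onlineAverage_pos hL
  have hoffline := offlineUtility_pos hL
  rw [← pMeanWelfare_const_mul (u := onlineAverage L ∘ lab) hgap hp fun a => (honline _).le]
  refine pMeanWelfare_le_of_log hp (fun a => mul_pos hgap (honline _)) (fun a => hoffline _)
    (fun hpos => ?_) (fun hneg => ?_)
  · simp only [Function.comp_apply, mul_rpow hgap.le (honline _).le, mul_assoc (_ ^ p),
      ← Finset.mul_sum]
    refine mul_nonneg (by positivity) (hlab.sum_mul_log_nonneg hL hK hB
      (W := fun g => onlineAverage L g ^ p) ?_ ?_)
    · simp [onlineAverage]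
    · exact le_sum_mul_sub_log_of_mem_Icc fun g hg => onlineAverage_rpow_mem_Icc hpos.le hpL hg
  · refine hlab.sum_mul_log_nonneg hL hK hB (W := fun g => offlineUtility L g ^ p) ?_ ?_
    · simp [offlineUtility]
    · refine le_sum_mul_sub_log_of_monotoneOn (fun i hi j hj hij => ?_) fun g _ => ?_
      · exact rpow_le_rpow_of_nonpos (hoffline j) (antitoneOn_offlineUtility L hi hj hij) hneg.le
      · exact one_le_rpow_of_pos_of_le_one_of_nonpos (hoffline g) (offlineUtility_le_one hL g)
          hneg.le

end IsLabelling

end Labels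

section ItemValue

variable {n : ℕ} {B C : Finset (Fin n)} {w : ℝ}

/-- The values of an item that is worth `w` to the members of `B` and nothing to all others. -/
def itemValue (B : Finset (Fin n)) (w : ℝ) : Fin n → ℝ := fun a => if a ∈ B then w else 0

@[simp] theorem itemValue_of_mem {a : Fin n} (ha : a ∈ B) : itemValue B w a = w := if_pos ha

@[simp] theorem itemValue_of_notMem {a : Fin n} (ha : a ∉ B) : itemValue B w a = 0 := if_neg ha

theorem itemValue_empty (w : ℝ) : itemValue (∅ : Finset (Fin n)) w = 0 :=
  funext fun a => itemValue_of_notMem (Finset.notMem_empty a)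

theorem itemValue_nonneg (hw : 0 ≤ w) (a : Fin n) : 0 ≤ itemValue B w a := by
  unfold itemValue
  split_ifs
  exacts [hw, le_rfl]

theorem sum_itemValue (B : Finset (Fin n)) (w : ℝ) : ∑ a, itemValue B w a = B.card * w := by
  simp [itemValue, Finset.sum_ite_mem]

theorem itemValue_union (h : Disjoint B C) (w : ℝ) :
    itemValue (B ∪ C) w = itemValue B w + itemValue C w := by
  ext a
  by_cases ha : a ∈ B
  · simp [itemValue, ha, Finset.disjoint_left.1 h ha]
  · simp [itemValue, ha]

theorem itemValue_add (B : Finset (Fin n)) (w x : ℝ) :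
    itemValue B (w + x) = itemValue B w + itemValue B x := by
  ext a
  by_cases ha : a ∈ B <;> simp [ha]

theorem itemValue_mul_of_subset (h : C ⊆ B) (w x : ℝ) :
    itemValue B w * itemValue C x = itemValue C (w * x) := by
  ext a
  by_cases ha : a ∈ C
  · simp [ha, h ha]
  · simp [ha]

end ItemValue

section Game

/-- A deterministic rule for allocating each item as a function of the value history. -/
abbrev OnlineRule (n : ℕ) := (k : ℕ) → (Fin (k + 1) → Fin n → ℝ) → (Fin n → ℝ)

/-- The rule never hands out more than one unit of an item. -/
def OnlineRule.IsFeasible {n : ℕ} (A : OnlineRule n) : Prop :=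
  ∀ k h, (∀ a, 0 ≤ A k h a) ∧ ∑ a, A k h a ≤ 1

/-- An instance `v` of the restricted kind (every item has at most one nonzero value) and an offline
allocation `y` of it, which lead to total values `V`, offline utilities `O` and online utilities
`U`. -/
structure IsPlay {n m : ℕ} (A : OnlineRule n) (V O U : Fin n → ℝ) (v y : Fin m → Fin n → ℝ) :
    Prop where
  value_nonneg : ∀ k a, 0 ≤ v k a
  binary : ∀ k, ∃ w : ℝ, 0 ≤ w ∧ ∀ a, v k a = 0 ∨ v k a = w
  share_nonneg : ∀ k a, 0 ≤ y k a
  sum_share_le : ∀ k, ∑ a, y k a ≤ 1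
  sum_value : ∀ a, ∑ k, v k a = V a
  sum_offline : ∀ a, ∑ k, v k a * y k a = O a
  online : onlineUtilities n m A v = U

/-- The adversary can bring about total values `V`, offline utilities `O` and online utilities
`U`. -/
def Reachable {n : ℕ} (A : OnlineRule n) (V O U : Fin n → ℝ) : Prop :=
  ∃ (m : ℕ) (v y : Fin m → Fin n → ℝ), IsPlay A V O U v y

variable {n m : ℕ} {A : OnlineRule n} {V O U : Fin n → ℝ} {B : Finset (Fin n)} {w : ℝ}

theorem onlineUtilities_nonneg (hA : A.IsFeasible) {v : Fin m → Fin n → ℝ}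
    (hv : ∀ k a, 0 ≤ v k a) (a : Fin n) : 0 ≤ onlineUtilities n m A v a :=
  Finset.sum_nonneg fun k _ => mul_nonneg (hv k a) ((hA _ _).1 a)

theorem onlineUtilities_snoc (A : OnlineRule n) (v : Fin m → Fin n → ℝ) (x : Fin n → ℝ) :
    onlineUtilities n (m + 1) A (Fin.snoc v x) =
      onlineUtilities n m A v + x * A m (Fin.snoc v x : Fin (m + 1) → Fin n → ℝ) := by
  have hhist : ∀ k : Fin m,
      (fun i : Fin (k.1 + 1) => (Fin.snoc v x : Fin (m + 1) → Fin n → ℝ)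
        (Fin.castLE k.castSucc.isLt i)) = fun i => v (Fin.castLE k.isLt i) :=
    fun k => funext fun i =>
      Fin.snoc_castSucc (α := fun _ => Fin n → ℝ) x v (Fin.castLE k.isLt i)
  ext a
  rw [onlineUtilities, Fin.sum_univ_castSucc]
  simp only [Fin.snoc_castSucc, Fin.snoc_last]
  exact congrArg₂ (· + ·)
    (Finset.sum_congr rfl fun k _ => congrArg (fun z => v k a * A k.1 z a) (hhist k)) rfl

theorem IsPlay.snoc {v y : Fin m → Fin n → ℝ} (h : IsPlay A V O U v y) (hw : 0 ≤ w)
    {z : Fin n → ℝ} (hz : ∀ a, 0 ≤ z a) (hz1 : ∑ a, z a ≤ 1) :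
    IsPlay A (V + itemValue B w) (O + itemValue B w * z)
      (U + itemValue B w * A m (Fin.snoc v (itemValue B w) : Fin (m + 1) → Fin n → ℝ))
      (Fin.snoc v (itemValue B w) : Fin (m + 1) → Fin n → ℝ)
      (Fin.snoc y z : Fin (m + 1) → Fin n → ℝ) where
  value_nonneg k := by
    induction k using Fin.lastCases with
    | last => simpa only [Fin.snoc_last] using itemValue_nonneg hw
    | cast i => simpa only [Fin.snoc_castSucc] using h.value_nonneg i
  binary k := by
    induction k using Fin.lastCases with
    | last =>
      refine ⟨w, hw, fun a => ?_⟩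
      rw [Fin.snoc_last]
      exact (ite_eq_or_eq _ w 0).symm
    | cast i => simpa only [Fin.snoc_castSucc] using h.binary i
  share_nonneg k := by
    induction k using Fin.lastCases with
    | last => simpa only [Fin.snoc_last] using hz
    | cast i => simpa only [Fin.snoc_castSucc] using h.share_nonneg i
  sum_share_le k := by
    induction k using Fin.lastCases with
    | last => simpa only [Fin.snoc_last] using hz1
    | cast i => simpa only [Fin.snoc_castSucc] using h.sum_share_le i
  sum_value a := by
    simp only [Fin.sum_univ_castSucc, Fin.snoc_castSucc, Fin.snoc_last, h.sum_value, Pi.add_apply]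
  sum_offline a := by
    simp only [Fin.sum_univ_castSucc, Fin.snoc_castSucc, Fin.snoc_last, h.sum_offline,
      Pi.add_apply, Pi.mul_apply]
  online := by rw [onlineUtilities_snoc, h.online]

namespace Reachable

theorem zero (A : OnlineRule n) : Reachable A 0 0 0 :=
  ⟨0, Fin.elim0, Fin.elim0, fun k => k.elim0, fun k => k.elim0, fun k => k.elim0,
    fun k => k.elim0, fun _ => Fin.sum_univ_zero _, fun _ => Fin.sum_univ_zero _,
    funext fun _ => Fin.sum_univ_zero _⟩

theorem nonneg_and_le (hA : A.IsFeasible) (h : Reachable A V O U) (a : Fin n) :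
    0 ≤ U a ∧ U a ≤ V a := by
  obtain ⟨m, v, y, h⟩ := h
  rw [← h.online, ← h.sum_value]
  refine ⟨onlineUtilities_nonneg hA h.value_nonneg a, Finset.sum_le_sum fun k _ =>
    mul_le_of_le_one_right (h.value_nonneg k a) ?_⟩
  exact (Finset.single_le_sum (fun b _ => (hA _ _).1 b) (Finset.mem_univ a)).trans (hA _ _).2

/- The offline share `y` of the next item may be chosen after the algorithm has committed to its
utilities. -/
theorem exists_next (hA : A.IsFeasible) (h : Reachable A V O U) (B : Finset (Fin n))
    (hw : 0 ≤ w) :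
    ∃ U' : Fin n → ℝ, (∀ a ∉ B, U' a = U a) ∧
      (∀ S : Finset (Fin n), ∑ a ∈ S, U' a ≤ ∑ a ∈ S, U a + w) ∧
      ∀ y : Fin n → ℝ, (∀ a, 0 ≤ y a) → ∑ a, y a ≤ 1 →
        Reachable A (V + itemValue B w) (O + itemValue B w * y) U' := by
  obtain ⟨m, v, y₀, h⟩ := h
  set α := A m (Fin.snoc v (itemValue B w) : Fin (m + 1) → Fin n → ℝ)
  obtain ⟨hα, hα1⟩ := hA m (Fin.snoc v (itemValue B w) : Fin (m + 1) → Fin n → ℝ)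
  refine ⟨U + itemValue B w * α, fun a ha => by simp [ha], fun S => ?_,
    fun y hy hy1 => ⟨m + 1, _, _, h.snoc hw hy hy1⟩⟩
  simp only [Pi.add_apply, Pi.mul_apply, Finset.sum_add_distrib]
  gcongr
  calc ∑ a ∈ S, itemValue B w a * α a ≤ ∑ a ∈ S, w * α a := by
        gcongr with a
        · exact hα a
        · unfold itemValue
          split_ifs
          exacts [le_rfl, hw]
    _ = w * ∑ a ∈ S, α a := (Finset.mul_sum ..).symm
    _ ≤ w * 1 := by
        gcongr
        exact (Finset.sum_le_univ_sum_of_nonneg hα).trans hα1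
    _ = w := mul_one w

end Reachable

end Game

section Rounds

theorem exists_subset_mul_sum_le {ι : Type*} (f : ι → ℝ) {h d : ℕ} {B : Finset ι}
    (hB : B.card = (h + 1) * d) :
    ∃ D ⊆ B, D.card = d ∧ (h + 1) * ∑ a ∈ D, f a ≤ ∑ a ∈ B, f a := by
  classical
  induction h generalizing B with
  | zero => exact ⟨B, subset_rfl, by simpa using hB, by simp⟩
  | succ h ih =>
    obtain ⟨C, hCB, hC⟩ := Finset.exists_subset_card_eq
      (show (h + 1) * d ≤ B.card by rw [hB]; gcongr; omega)
    obtain ⟨D, hDC, hD, hsum⟩ := ih hC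
    have hrest : (B \ C).card = d := by
      rw [Finset.card_sdiff_of_subset hCB, hB, hC, ← Nat.sub_mul, Nat.add_sub_cancel_left, one_mul]
    rw [← Finset.sum_sdiff hCB]
    push_cast
    rcases le_total (∑ a ∈ D, f a) (∑ a ∈ B \ C, f a) with hle | hle
    · exact ⟨D, hDC.trans hCB, hD, by linarith⟩
    · have := mul_le_mul_of_nonneg_left hle (by positivity : (0 : ℝ) ≤ h + 1)
      exact ⟨B \ C, Finset.sdiff_subset, hrest, by linarith⟩

variable {n : ℕ} {A : OnlineRule n} {V O U : Fin n → ℝ} {B : Finset (Fin n)} {w : ℝ} {h d N : ℕ}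

namespace Reachable

/- The members of `D` are the poorest; they share the item offline. -/
theorem exists_drop (hA : A.IsFeasible) (hr : Reachable A V O U) (hw : 0 ≤ w)
    (hB : B.card = (h + 1) * d) :
    ∃ D ⊆ B, D.card = d ∧ ∃ U' : Fin n → ℝ,
      Reachable A (V + itemValue B w) (O + itemValue D (w / d)) U' ∧ (∀ a ∉ B, U' a = U a) ∧
      ∑ a ∈ B, U' a ≤ ∑ a ∈ B, U a + w ∧ (h + 1) * ∑ a ∈ D, U' a ≤ ∑ a ∈ B, U' a := by
  obtain ⟨U', hout, hsum, hnext⟩ := hr.exists_next hA B hw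
  obtain ⟨D, hDB, hD, hDsum⟩ := exists_subset_mul_sum_le U' hB
  refine ⟨D, hDB, hD, U', ?_, hout, hsum B, hDsum⟩
  have hshare := hnext (itemValue D (1 / d)) (itemValue_nonneg (by positivity))
    (by rw [sum_itemValue, hD, mul_one_div]; exact div_self_le_one _)
  rwa [itemValue_mul_of_subset hDB, mul_one_div] at hshare

theorem exists_round (hA : A.IsFeasible) (hr : Reachable A V O U) (hw : 0 ≤ w)
    (hB : B.card = N * ((h + 1) * d)) :
    ∃ D ⊆ B, D.card = N * d ∧ ∃ U' : Fin n → ℝ,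
      Reachable A (V + itemValue B w) (O + itemValue D (w / d)) U' ∧ (∀ a ∉ B, U' a = U a) ∧
      ∑ a ∈ B, U' a ≤ ∑ a ∈ B, U a + N * w ∧ (h + 1) * ∑ a ∈ D, U' a ≤ ∑ a ∈ B, U' a := by
  induction N generalizing V O U B with
  | zero =>
    obtain rfl : B = ∅ := by simpa using hB
    exact ⟨∅, subset_rfl, by simp, U, by simpa only [itemValue_empty, add_zero] using hr, by simp⟩
  | succ N ih =>
    obtain ⟨C, hCB, hC⟩ := Finset.exists_subset_card_eq
      (show (h + 1) * d ≤ B.card by rw [hB]; exact Nat.le_mul_of_pos_left _ N.succ_pos)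
    have hrest : (B \ C).card = N * ((h + 1) * d) := by
      rw [Finset.card_sdiff_of_subset hCB, hB, hC, Nat.succ_mul, Nat.add_sub_cancel]
    obtain ⟨D₁, hD₁C, hD₁, U₁, hr₁, hout₁, hsum₁, hdrop₁⟩ := hr.exists_drop hA hw hC
    obtain ⟨D₂, hD₂, hD₂card, U₂, hr₂, hout₂, hsum₂, hdrop₂⟩ := ih hr₁ hrest
    have hdisj : Disjoint C (B \ C) := Finset.disjoint_sdiff
    have hdisjD : Disjoint D₁ D₂ := hdisj.mono hD₁C hD₂
    have hC₂ : ∀ S ⊆ C, ∑ a ∈ S, U₂ a = ∑ a ∈ S, U₁ a := fun S hS =>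
      Finset.sum_congr rfl fun a ha => hout₂ a (Finset.disjoint_left.1 hdisj (hS ha))
    have hrest₁ : ∑ a ∈ B \ C, U₁ a = ∑ a ∈ B \ C, U a :=
      Finset.sum_congr rfl fun a ha => hout₁ a (Finset.disjoint_right.1 hdisj ha)
    refine ⟨D₁ ∪ D₂, Finset.union_subset (hD₁C.trans hCB) (hD₂.trans Finset.sdiff_subset),
      by rw [Finset.card_union_of_disjoint hdisjD, hD₁, hD₂card]; ring, U₂, ?_, fun a ha => ?_, ?_⟩
    · rw [itemValue_union hdisjD, ← Finset.union_sdiff_of_subset hCB, itemValue_union hdisj]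
      simpa only [add_assoc] using hr₂
    · rw [hout₂ a fun h => ha (Finset.mem_sdiff.1 h).1, hout₁ a fun h => ha (hCB h)]
    · rw [← Finset.sum_sdiff hCB, ← Finset.sum_sdiff hCB, Finset.sum_union hdisjD, hC₂ C subset_rfl,
        hC₂ D₁ hD₁C, ← hrest₁]
      push_cast
      constructor <;> linarith

end Reachable

end Rounds

section Tower

variable {n h c g K : ℕ} {B D : Finset (Fin n)} {lab : Fin n → ℕ}

/-- Gives the members of `D`, who are dropped at height `h`, the label `h`. -/
def labelWith (D : Finset (Fin n)) (h : ℕ) (lab : Fin n → ℕ) : Fin n → ℕ :=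
  fun a => if a ∈ D then h else lab a

namespace IsLabelling

theorem eq_zero_of_mem (hlab : IsLabelling (B \ D) h c lab) {a : Fin n} (ha : a ∈ D) :
    lab a = 0 :=
  (hlab.eq_zero_iff a).2 fun h => (Finset.mem_sdiff.1 h).2 ha

theorem filter_labelWith_of_mem_Icc (hlab : IsLabelling (B \ D) h c lab) (hg : g ∈ Finset.Icc 1 h) :
    Finset.univ.filter (labelWith D (h + 1) lab · = g) = Finset.univ.filter (lab · = g) := by
  obtain ⟨hg1, hgh⟩ := Finset.mem_Icc.1 hg
  refine Finset.filter_congr fun a _ => ?_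
  by_cases ha : a ∈ D
  · rw [labelWith, if_pos ha, hlab.eq_zero_of_mem ha]
    omega
  · rw [labelWith, if_neg ha]

theorem filter_labelWith_succ (hlab : IsLabelling (B \ D) h c lab) :
    Finset.univ.filter (labelWith D (h + 1) lab · = h + 1) = D := by
  ext a
  rw [Finset.mem_filter_univ]
  by_cases ha : a ∈ D
  · rw [labelWith, if_pos ha]
    exact iff_of_true rfl ha
  · rw [labelWith, if_neg ha]
    exact iff_of_false (Nat.lt_succ_of_le (hlab.le a)).ne ha

theorem succ (hlab : IsLabelling (B \ D) h c lab) (hDB : D ⊆ B) (hD : D.card = c) :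
    IsLabelling B (h + 1) c (labelWith D (h + 1) lab) where
  le a := by
    unfold labelWith
    split_ifs
    exacts [le_rfl, (hlab.le a).trans h.le_succ]
  eq_zero_iff a := by
    by_cases ha : a ∈ D
    · simp [labelWith, ha, hDB ha]
    · simp [labelWith, ha, hlab.eq_zero_iff a]
  card_fiber g hg := by
    obtain ⟨hg1, hgh⟩ := Finset.mem_Icc.1 hg
    rcases hgh.eq_or_lt with rfl | hlt
    · rw [hlab.filter_labelWith_succ, hD]
    · have hg' := Finset.mem_Icc.2 ⟨hg1, Nat.le_of_lt_succ hlt⟩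
      rw [hlab.filter_labelWith_of_mem_Icc hg', hlab.card_fiber g hg']

end IsLabelling

/-- The offline utility that an agent with label `g` collects from items of value `w`. -/
noncomputable def offlineShare (w : ℝ) (g : ℕ) : ℝ := if g = 0 then 0 else w / 2 ^ g

theorem IsLabelling.offlineShare_comp_labelWith (hlab : IsLabelling (B \ D) h c lab) (w : ℝ) :
    offlineShare w ∘ labelWith D (h + 1) lab =
      itemValue D (w / 2 ^ (h + 1)) + offlineShare w ∘ lab := by
  ext a
  by_cases ha : a ∈ D
  · simp [labelWith, offlineShare, ha, hlab.eq_zero_of_mem ha]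
  · simp [labelWith, ha]

namespace Reachable

variable {A : OnlineRule n} {V O U : Fin n → ℝ} {w : ℝ} {d : ℕ}

/- The second item, worth `h * w` to the members of `D`, makes up for the `h` rounds that they
miss. -/
theorem exists_level (hA : A.IsFeasible) (hr : Reachable A V O U) (hw : 0 ≤ w)
    (hB : B.card = K * ((h + 1) * d)) :
    ∃ D ⊆ B, D.card = K * d ∧ ∃ U' : Fin n → ℝ,
      Reachable A (V + itemValue B w + itemValue D (h * w)) (O + itemValue D (w / d)) U' ∧
      (∀ a ∉ B, U' a = U a) ∧ ∑ a ∈ B \ D, U' a ≤ ∑ a ∈ B, U a + K * w ∧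
      (h + 1) * ∑ a ∈ D, U' a ≤ ∑ a ∈ B, U a + K * w + (h + 1) * (h * w) := by
  obtain ⟨D, hDB, hD, U₁, hr₁, hout₁, hsum₁, hdrop⟩ := hr.exists_round hA hw hB
  have hhw : 0 ≤ h * w := by positivity
  obtain ⟨U₂, hout₂, hsum₂, hnext⟩ := hr₁.exists_next hA D hhw
  have hr₂ := hnext 0 (fun _ => le_rfl) (by simp)
  rw [mul_zero, add_zero] at hr₂
  have hkeep : ∑ a ∈ B \ D, U₂ a ≤ ∑ a ∈ B, U₁ a := by
    rw [Finset.sum_congr rfl fun a ha => hout₂ a (Finset.mem_sdiff.1 ha).2]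
    exact Finset.sum_le_sum_of_subset_of_nonneg Finset.sdiff_subset
      fun a _ _ => (hr₁.nonneg_and_le hA a).1
  have hfill : (h + 1) * ∑ a ∈ D, U₂ a ≤ (h + 1) * (∑ a ∈ D, U₁ a + h * w) := by
    gcongr
    exact hsum₂ D
  exact ⟨D, hDB, hD, U₂, hr₂,
    fun a ha => (hout₂ a fun h => ha (hDB h)).trans (hout₁ a ha), by linarith, by linarith⟩

theorem exists_labelling (hA : A.IsFeasible) (hr : Reachable A V O U) (hw : 0 ≤ w)
    (hB : B.card = K * (h * 2 ^ h)) :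
    ∃ (lab : Fin n → ℕ) (U' : Fin n → ℝ), IsLabelling B h (K * 2 ^ h) lab ∧
      Reachable A (V + itemValue B (h * w)) (O + offlineShare w ∘ lab) U' ∧
      (∀ a ∉ B, U' a = U a) ∧ ∀ g ∈ Finset.Icc 1 h,
        g * ∑ a with lab a = g, U' a ≤
          ∑ a ∈ B, U a + K * w * (2 ^ (h + 1) / 2 ^ g - 1) + g * ((g - 1) * w) := by
  induction h generalizing K B V O U with
  | zero =>
    obtain rfl : B = ∅ := by simpa using hB
    refine ⟨fun _ => 0, U, ⟨fun _ => le_rfl, by simp, by simp⟩, ?_, by simp, by simp⟩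
    have hshare : offlineShare w ∘ (fun _ : Fin n => 0) = 0 :=
      funext fun _ => by simp [offlineShare]
    rwa [itemValue_empty, hshare, add_zero, add_zero]
  | succ h ih =>
    obtain ⟨D, hDB, hD, U₁, hr₁, hout₁, hkeep, hdrop⟩ := hr.exists_level hA hw hB
    have hrest : (B \ D).card = 2 * K * (h * 2 ^ h) := by
      rw [Finset.card_sdiff_of_subset hDB, hB, hD, add_mul, mul_add, one_mul, Nat.add_sub_cancel]
      ring
    obtain ⟨lab, U₂, hlab, hr₂, hout₂, hsum⟩ := ih hr₁ hrest
    have hcount : 2 * K * 2 ^ h = K * 2 ^ (h + 1) := by ring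
    rw [hcount] at hlab
    refine ⟨labelWith D (h + 1) lab, U₂, hlab.succ hDB hD, ?_, fun a ha => ?_, fun g hg => ?_⟩
    · convert hr₂ using 1
      · rw [Nat.cast_succ, add_mul, one_mul, add_comm (h * w), itemValue_add, add_assoc V,
          add_assoc V, add_assoc (itemValue B w), ← itemValue_union Finset.disjoint_sdiff,
          Finset.union_sdiff_of_subset hDB]
      · rw [hlab.offlineShare_comp_labelWith, ← add_assoc]
        norm_cast
    · rw [hout₂ a fun h => ha (Finset.mem_sdiff.1 h).1, hout₁ a ha]
    obtain ⟨hg1, hgh⟩ := Finset.mem_Icc.1 hg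
    rcases hgh.eq_or_lt with rfl | hlt
    · rw [hlab.filter_labelWith_succ, Finset.sum_congr rfl fun a ha => hout₂ a fun h =>
        (Finset.mem_sdiff.1 h).2 ha, pow_succ 2 (h + 1), mul_div_cancel_left₀ _ (by positivity)]
      push_cast
      linarith
    · have hg' := Finset.mem_Icc.2 ⟨hg1, Nat.le_of_lt_succ hlt⟩
      rw [hlab.filter_labelWith_of_mem_Icc hg', pow_succ 2 (h + 1), mul_div_right_comm]
      have := hsum g hg'
      push_cast at this
      linarith

end Reachable

end Tower

section HardInstance

variable {n L K : ℕ} {p : ℝ} {A : OnlineRule n} {B : Finset (Fin n)} {lab : Fin n → ℕ}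
  {U : Fin n → ℝ}

theorem IsLabelling.sum_fiber_le_onlineAverage (hlab : IsLabelling B L (K * 2 ^ L) lab)
    (hK : L ^ 2 ≤ K) (hU : ∀ a, U a ≤ 1)
    (hsum : ∀ g ∈ Finset.Icc 1 L, g * ∑ a with lab a = g, U a ≤
      K * (1 / L) * (2 ^ (L + 1) / 2 ^ g - 1) + g * ((g - 1) * (1 / L))) (g : ℕ) :
    ∑ a with lab a = g, U a ≤ ∑ a with lab a = g, onlineAverage L (lab a) := by
  rw [Finset.sum_congr rfl fun a ha =>
    congrArg (onlineAverage L) (Finset.mem_filter.1 ha).2, Finset.sum_const, nsmul_eq_mul]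
  by_cases hg : g ∈ Finset.Icc 1 L
  · obtain ⟨hg1, hgL⟩ := Finset.mem_Icc.1 hg
    have hL0 : 0 < L := Nat.lt_of_lt_of_le hg1 hgL
    have hg0 : (0 : ℝ) < g := by exact_mod_cast hg1
    have hgL' : (g : ℝ) ≤ L := by exact_mod_cast hgL
    have hK' : (L : ℝ) ^ 2 ≤ K := by exact_mod_cast hK
    have hfill : (g * ((g - 1) * (1 / L)) : ℝ) ≤ K * (1 / L) := by
      rw [← mul_assoc]
      gcongr
      nlinarith
    rw [hlab.card_fiber g hg]
    refine le_of_mul_le_mul_left ((hsum g hg).trans ?_) hg0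
    calc (K * (1 / L) * (2 ^ (L + 1) / 2 ^ g - 1) + g * ((g - 1) * (1 / L)) : ℝ)
        ≤ K * (1 / L) * (2 ^ (L + 1) / 2 ^ g) := by linarith
      _ = g * ((K * 2 ^ L : ℕ) * onlineAverage L g) := by
        rw [onlineAverage, if_neg (by omega)]
        push_cast
        field_simp
        ring
  · rcases g.eq_zero_or_pos with rfl | hg0
    · simpa [onlineAverage] using
        Finset.sum_le_card_nsmul (Finset.univ.filter (lab · = 0)) U 1 fun a _ => hU a
    · have hempty : Finset.univ.filter (lab · = g) = ∅ :=
        Finset.filter_eq_empty_iff.2 fun a _ ha =>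
          hg (Finset.mem_Icc.2 ⟨hg0, ha ▸ hlab.le a⟩)
      simp [hempty]

theorem IsLabelling.offlineUtility_comp (hlab : IsLabelling B L K lab) :
    offlineUtility L ∘ lab = itemValue Bᶜ 1 + offlineShare (1 / L) ∘ lab := by
  ext a
  by_cases ha : a ∈ B
  · have h0 : lab a ≠ 0 := fun h => (hlab.eq_zero_iff a).1 h ha
    simp [offlineUtility, offlineShare, ha, h0, div_eq_mul_inv, mul_comm]
  · simp [offlineUtility, offlineShare, ha, (hlab.eq_zero_iff a).2 ha]

namespace Reachable

theorem exists_private (hA : A.IsFeasible) (S : Finset (Fin n)) :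
    ∃ U : Fin n → ℝ, Reachable A (itemValue S 1) (itemValue S 1) U ∧ ∀ a ∉ S, U a = 0 := by
  obtain ⟨D, hDS, hD, U, hr, hout, -⟩ :=
    (zero A).exists_round (B := S) (N := S.card) (h := 0) (d := 1) hA zero_le_one (by simp)
  obtain rfl : D = S := Finset.eq_of_subset_of_card_le hDS (by omega)
  exact ⟨U, by simpa using hr, hout⟩

theorem exists_offlineUtility (hA : A.IsFeasible) (hL : 1 ≤ L) (hn : L ^ 3 * 2 ^ L ≤ n) :
    ∃ (B : Finset (Fin n)) (K : ℕ) (lab : Fin n → ℕ) (U : Fin n → ℝ),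
      IsLabelling B L (K * 2 ^ L) lab ∧ L ≤ K ∧ Bᶜ.card ≤ L * 2 ^ L ∧
      Reachable A 1 (offlineUtility L ∘ lab) U ∧
      ∀ g, ∑ a with lab a = g, U a ≤ ∑ a with lab a = g, onlineAverage L (lab a) := by
  have hblock : 0 < L * 2 ^ L := by positivity
  set K := n / (L * 2 ^ L)
  have hK : L ^ 2 ≤ K := (Nat.le_div_iff_mul_le hblock).2 (le_of_eq_of_le (by ring) hn)
  obtain ⟨B, -, hB⟩ := Finset.exists_subset_card_eq
    (show K * (L * 2 ^ L) ≤ (Finset.univ : Finset (Fin n)).card by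
      simpa using Nat.div_mul_le_self n (L * 2 ^ L))
  have hBc : Bᶜ.card ≤ L * 2 ^ L := by
    rw [Finset.card_compl, Fintype.card_fin, hB, ← Nat.mod_eq_sub_div_mul]
    exact (Nat.mod_lt n hblock).le
  obtain ⟨U₁, hr₁, hout₁⟩ := exists_private hA Bᶜ
  have hU₁ : ∑ a ∈ B, U₁ a = 0 := Finset.sum_eq_zero fun a ha => hout₁ a (by simpa using ha)
  obtain ⟨lab, U₂, hlab, hr₂, -, hsum⟩ :=
    hr₁.exists_labelling hA (by positivity : (0 : ℝ) ≤ 1 / L) hB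
  have hvalue : itemValue Bᶜ 1 + itemValue B (L * (1 / L)) = 1 := by
    rw [mul_one_div_cancel (by positivity)]
    ext a
    by_cases ha : a ∈ B <;> simp [ha]
  rw [hvalue, ← hlab.offlineUtility_comp] at hr₂
  simp only [hU₁, zero_add] at hsum
  exact ⟨B, K, lab, U₂, hlab, (Nat.le_self_pow two_ne_zero L).trans hK, hBc, hr₂,
    hlab.sum_fiber_le_onlineAverage hK (fun a => (hr₂.nonneg_and_le hA a).2) hsum⟩

end Reachable

/-- Some instance of the kind required by the theorem separates `A` from the optimum by a factor
`r`. -/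
def HasGap (A : OnlineRule n) (p r : ℝ) : Prop :=
  ∃ m : ℕ, ∃ v : Fin m → Fin n → ℝ,
    (∀ k a, 0 ≤ v k a) ∧ (∀ a, ∑ k, v k a = 1) ∧
    (∀ k, ∃ w : ℝ, 0 ≤ w ∧ ∀ a, v k a = 0 ∨ v k a = w) ∧
    OPTwelfare n m p v ≥ r * ALGwelfare n m p A v

theorem HasGap.mono {r s : ℝ} (hA : A.IsFeasible) (h : HasGap A p s) (hrs : r ≤ s) :
    HasGap A p r := by
  obtain ⟨m, v, hv, hunit, hbinary, hgap⟩ := h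
  refine ⟨m, v, hv, hunit, hbinary, le_trans ?_ hgap⟩
  exact mul_le_mul_of_nonneg_right hrs (pMeanWelfare_nonneg (onlineUtilities_nonneg hA hv))

theorem pMeanWelfare_le_OPTwelfare {m : ℕ} {v y : Fin m → Fin n → ℝ} (hp : p ≠ 0)
    (hv : ∀ k a, 0 ≤ v k a) (hunit : ∀ a, ∑ k, v k a ≤ 1) (hy : ∀ k a, 0 ≤ y k a)
    (hy1 : ∀ k, ∑ a, y k a ≤ 1) :
    pMeanWelfare n p (fun a => ∑ k, v k a * y k a) ≤ OPTwelfare n m p v := by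
  refine le_csSup ⟨pMeanWelfare n p 1, ?_⟩ ⟨y, hy, hy1, rfl⟩
  rintro _ ⟨z, hz, hz1, rfl⟩
  refine pMeanWelfare_mono hp (fun a => Finset.sum_nonneg fun k _ => mul_nonneg (hv k a) (hz k a))
    (fun _ => one_pos) fun a => (Finset.sum_le_sum fun k _ => ?_).trans (hunit a)
  exact mul_le_of_le_one_right (hv k a)
    ((Finset.single_le_sum (fun b _ => hz k b) (Finset.mem_univ a)).trans (hz1 k))

theorem Reachable.hasGap {O : Fin n → ℝ} {r : ℝ} (h : Reachable A 1 O U) (hp : p ≠ 0)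
    (hr : r * pMeanWelfare n p U ≤ pMeanWelfare n p O) : HasGap A p r := by
  obtain ⟨m, v, y, h⟩ := h
  refine ⟨m, v, h.value_nonneg, h.sum_value, h.binary, ?_⟩
  calc r * ALGwelfare n m p A v = r * pMeanWelfare n p U := by rw [ALGwelfare, h.online]
    _ ≤ pMeanWelfare n p O := hr
    _ = pMeanWelfare n p fun a => ∑ k, v k a * y k a := by rw [funext h.sum_offline]
    _ ≤ OPTwelfare n m p v := pMeanWelfare_le_OPTwelfare hp h.value_nonneg
      (fun a => (h.sum_value a).le) h.share_nonneg h.sum_share_le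

theorem hasGap_of_pow_le (hA : A.IsFeasible) (hL : 1 ≤ L) (hn : L ^ 3 * 2 ^ L ≤ n) (hp : p ≠ 0)
    (hpL : L * p ≤ 1) : HasGap A p (gapConstant * L) := by
  obtain ⟨B, K, lab, U, hlab, hK, hB, hreach, hfiber⟩ := Reachable.exists_offlineUtility hA hL hn
  have hL' : (1 : ℝ) ≤ L := by exact_mod_cast hL
  have hp1 : p ≤ 1 := by
    by_contra! h
    nlinarith
  have honline := pMeanWelfare_le_of_sum_fiber_le hp hp1
    (fun a => (hreach.nonneg_and_le hA a).1) (onlineAverage_pos hL) hfiber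
  refine hreach.hasGap hp (le_trans ?_ (hlab.gap_mul_pMeanWelfare_le hL hK hB hp hpL))
  exact mul_le_mul_of_nonneg_left honline (mul_nonneg gapConstant_pos.le (by positivity))

theorem pow_mul_two_pow_le {x : ℝ} (hn : 1 ≤ n) (hx : 16 ≤ x) (hL : (L : ℝ) ≤ log n / x) :
    L ^ 3 * 2 ^ L ≤ n := by
  have hexp : (16 : ℝ) ≤ exp 16 := by linarith [add_one_le_exp (16 : ℝ)]
  have hlog : (L * 16 : ℝ) ≤ log n :=
    calc (L * 16 : ℝ) ≤ L * x := by gcongr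
      _ ≤ log n := (le_div_iff₀ (by positivity)).1 hL
  have hpow : (16 : ℝ) ^ L ≤ n :=
    calc (16 : ℝ) ^ L ≤ exp 16 ^ L := by gcongr
      _ = exp (L * 16) := (exp_nat_mul 16 L).symm
      _ ≤ n := (le_log_iff_exp_le (by positivity)).1 hlog
  calc L ^ 3 * 2 ^ L ≤ (2 ^ L) ^ 3 * 2 ^ L := by gcongr; exact L.lt_two_pow_self.le
    _ = 16 ^ L := by rw [← pow_succ, ← pow_mul, mul_comm, pow_mul]; norm_num
    _ ≤ n := by exact_mod_cast hpow

theorem hasGap_of_le {x z : ℝ} (hA : A.IsFeasible) (hn : 1 ≤ n) (hx : 16 ≤ x) (hz : 1 ≤ z)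
    (hzx : z ≤ log n / x) (hp : p ≠ 0) (hpz : p * z ≤ 1) :
    HasGap A p (gapConstant / 2 * z) := by
  have hL : 1 ≤ ⌊z⌋₊ := (Nat.one_le_floor_iff z).2 hz
  have hLz : (⌊z⌋₊ : ℝ) ≤ z := Nat.floor_le (by positivity)
  have hzL : z ≤ 2 * ⌊z⌋₊ := by
    have : (1 : ℝ) ≤ ⌊z⌋₊ := by exact_mod_cast hL
    linarith [Nat.lt_floor_add_one z]
  have hpL : ⌊z⌋₊ * p ≤ 1 := by
    rcases hp.lt_or_gt with hneg | hpos
    · exact (mul_nonpos_of_nonneg_of_nonpos (Nat.cast_nonneg _) hneg.le).trans zero_le_one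
    · exact (mul_le_mul_of_nonneg_right hLz hpos.le).trans (mul_comm p z ▸ hpz)
  refine (hasGap_of_pow_le hA hL (pow_mul_two_pow_le hn hx (hLz.trans hzx)) hp hpL).mono hA ?_
  calc gapConstant / 2 * z ≤ gapConstant / 2 * (2 * ⌊z⌋₊) := by
        gcongr
        exact (half_pos gapConstant_pos).le
    _ = gapConstant * ⌊z⌋₊ := by ring

end HardInstance

theorem stmt_12 :
    ∃ c : ℝ, 0 < c ∧ ∃ n₀ : ℕ, ∀ n : ℕ, n₀ ≤ n →
    ∀ A : (k : ℕ) → (Fin (k + 1) → Fin n → ℝ) → (Fin n → ℝ),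
      (∀ k h, (∀ a, 0 ≤ A k h a) ∧ ∑ a, A k h a ≤ 1) →
      (∀ p : ℝ, Real.log (Real.log n) / Real.log n ≤ p → p ≤ 1 →
        ∃ m : ℕ, ∃ v : Fin m → Fin n → ℝ,
          (∀ k a, 0 ≤ v k a) ∧ (∀ a, ∑ k, v k a = 1) ∧
          (∀ k, ∃ w : ℝ, 0 ≤ w ∧ ∀ a, v k a = 0 ∨ v k a = w) ∧
          OPTwelfare n m p v ≥ (c / p) * ALGwelfare n m p A v) ∧
      (∀ p : ℝ, p ≤ 1 → p < Real.log (Real.log n) / Real.log n → p ≠ 0 →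
        ∃ m : ℕ, ∃ v : Fin m → Fin n → ℝ,
          (∀ k a, 0 ≤ v k a) ∧ (∀ a, ∑ k, v k a = 1) ∧
          (∀ k, ∃ w : ℝ, 0 ≤ w ∧ ∀ a, v k a = 0 ∨ v k a = w) ∧
          OPTwelfare n m p v ≥
            c * (Real.log n / Real.log (Real.log n)) * ALGwelfare n m p A v) := by
  refine ⟨gapConstant / 2, half_pos gapConstant_pos, ⌈exp (exp 16)⌉₊, fun n hn A hA => ?_⟩
  have hexp : exp (exp 16) ≤ n := Nat.ceil_le.1 hn
  have hn0 : (0 : ℝ) < n := (exp_pos _).trans_le hexp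
  have hn1 : 1 ≤ n := by exact_mod_cast hn0
  have hlog : exp 16 ≤ log n := (le_log_iff_exp_le hn0).2 hexp
  have hlog0 : 0 < log n := (exp_pos _).trans_le hlog
  have hloglog : 16 ≤ log (log n) := (le_log_iff_exp_le hlog0).2 hlog
  have hloglog0 : 0 < log (log n) := by linarith
  refine ⟨fun p hp hp1 => ?_, fun p _ hp hp0 => ?_⟩
  · have hpos : 0 < p := (div_pos hloglog0 hlog0).trans_le hp
    have hz : 1 / p ≤ log n / log (log n) := by
      rw [← one_div_div (log (log n))]
      gcongr
    have hgap := hasGap_of_le hA hn1 hloglog ((one_le_div hpos).2 hp1) hz hpos.ne'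
      (mul_one_div_cancel hpos.ne').le
    rwa [mul_one_div] at hgap
  · have hz : 1 ≤ log n / log (log n) :=
      (one_le_div hloglog0).2 ((log_le_sub_one_of_pos hlog0).trans (sub_le_self _ zero_le_one))
    have hpz : p * (log n / log (log n)) ≤ 1 := by
      rw [← le_div_iff₀ (by positivity), one_div_div]
      exact hp.le
    exact hasGap_of_le hA hn1 hloglog hz le_rfl hp0 hpz
end

section
/- Let q > 0, let 0 ≤ α < q, and let L ≥ 1 be an integer. Define s_ℓ = 1 − ((q − α)/(2·∑_{i=1}^L q^i + 1)) · ∑_{i=L−ℓ}^{L−1} q^i for 0 ≤ ℓ ≤ L. Then s_0 = 1, the sequence s_0 > s_1 > … > s_L is strictly decreasing, s_L ≥ 0, and s_{ℓ−1} + q·(1 − s_ℓ) = s_L·(1 + q) − α for every 1 ≤ ℓ ≤ L. -/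
/-!
Write `c` for the factor in front of the sum in `s ℓ` and `A ℓ` for the sum itself. Multiplication
by `q` shifts the exponents, so `q * A (ℓ + 1) = A ℓ + q ^ L`, and therefore
`s ℓ + q * (1 - s (ℓ + 1)) = 1 + c * q ^ L` does not depend on `ℓ`. The denominator of `c` is
`2 * q * A L + 1`, chosen so that this constant is `s L * (1 + q) - α`.
-/

open Finset

section Semiring

variable {R : Type*} [Semiring R]

lemma mul_sum_Ico_pow (q : R) (m n : ℕ) :
    q * ∑ i ∈ Ico m n, q ^ i = ∑ i ∈ Ico (m + 1) (n + 1), q ^ i := by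
  simp only [mul_sum, ← pow_succ', sum_Ico_add' (fun i ↦ q ^ i)]

lemma mul_sum_Ico_pow_of_lt (q : R) {m n : ℕ} (hmn : m < n) :
    q * ∑ i ∈ Ico m n, q ^ i = ∑ i ∈ Ico (m + 1) n, q ^ i + q ^ n := by
  rw [mul_sum_Ico_pow, sum_Ico_succ_top hmn]

lemma sum_Icc_one_pow (q : R) (n : ℕ) :
    ∑ i ∈ Icc 1 n, q ^ i = q * ∑ i ∈ range n, q ^ i := by
  rw [range_eq_Ico, mul_sum_Ico_pow, zero_add, Ico_add_one_right_eq_Icc]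

end Semiring

section Field

variable {K : Type*} [Field K]

/-- The factor by which `levelSeq` scales its geometric sums. -/
def levelScale (q α : K) (L : ℕ) : K :=
  (q - α) / (2 * ∑ i ∈ Icc 1 L, q ^ i + 1)

/-- The sequence `s_ℓ`, for `ℓ ≤ L`. The exponents `L - ℓ, …, L - 1` are encoded as a half-open
interval, which avoids the truncated subtraction `L - 1`. -/
def levelSeq (q α : K) (L ℓ : ℕ) : K :=
  1 - levelScale q α L * ∑ i ∈ Ico (L - ℓ) L, q ^ i

lemma levelSeq_zero (q α : K) (L : ℕ) : levelSeq q α L 0 = 1 := by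
  simp [levelSeq]

lemma levelSeq_self (q α : K) (L : ℕ) :
    levelSeq q α L L = 1 - levelScale q α L * ∑ i ∈ range L, q ^ i := by
  rw [levelSeq, Nat.sub_self, range_eq_Ico]

lemma levelSeq_succ (q α : K) {L ℓ : ℕ} (hℓ : ℓ < L) :
    levelSeq q α L (ℓ + 1) = levelSeq q α L ℓ - levelScale q α L * q ^ (L - (ℓ + 1)) := by
  rw [levelSeq, levelSeq, sum_eq_sum_Ico_succ_bot (by lia), show L - (ℓ + 1) + 1 = L - ℓ by lia]
  ring

lemma levelSeq_add_mul_one_sub_levelSeq_succ (q α : K) {L ℓ : ℕ} (hℓ : ℓ < L) :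
    levelSeq q α L ℓ + q * (1 - levelSeq q α L (ℓ + 1)) = 1 + levelScale q α L * q ^ L := by
  have shift := mul_sum_Ico_pow_of_lt q (show L - (ℓ + 1) < L by lia)
  rw [show L - (ℓ + 1) + 1 = L - ℓ by lia] at shift
  rw [levelSeq, levelSeq]
  linear_combination levelScale q α L * shift

lemma levelSeq_self_mul_one_add_sub {q : K} (α : K) {L : ℕ}
    (hD : 2 * ∑ i ∈ Icc 1 L, q ^ i + 1 ≠ 0) :
    levelSeq q α L L * (1 + q) - α = 1 + levelScale q α L * q ^ L := by
  have scale_mul : levelScale q α L * (2 * ∑ i ∈ Icc 1 L, q ^ i + 1) = q - α :=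
    div_mul_cancel₀ _ hD
  rw [sum_Icc_one_pow] at scale_mul
  rw [levelSeq_self]
  linear_combination levelScale q α L * mul_geom_sum q L - scale_mul

section Order

variable [LinearOrder K] [IsStrictOrderedRing K] {q α : K}

lemma two_mul_sum_Icc_pow_add_one_pos (hq : 0 ≤ q) (m n : ℕ) :
    0 < 2 * ∑ i ∈ Icc m n, q ^ i + 1 := by
  positivity

lemma levelScale_pos (hq : 0 ≤ q) (hαq : α < q) (L : ℕ) : 0 < levelScale q α L :=
  div_pos (sub_pos.2 hαq) (two_mul_sum_Icc_pow_add_one_pos hq 1 L)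

lemma levelSeq_succ_lt (hq : 0 < q) (hαq : α < q) {L ℓ : ℕ} (hℓ : ℓ < L) :
    levelSeq q α L (ℓ + 1) < levelSeq q α L ℓ := by
  rw [levelSeq_succ q α hℓ]
  exact sub_lt_self _ (mul_pos (levelScale_pos hq.le hαq L) (pow_pos hq _))

lemma levelSeq_self_nonneg (hq : 0 ≤ q) (hα : -q ≤ α) (L : ℕ) : 0 ≤ levelSeq q α L L := by
  rw [levelSeq_self, sub_nonneg, levelScale, div_mul_eq_mul_div,
    div_le_one (two_mul_sum_Icc_pow_add_one_pos hq 1 L), sum_Icc_one_pow]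
  calc (q - α) * ∑ i ∈ range L, q ^ i
      ≤ (2 * q) * ∑ i ∈ range L, q ^ i := by gcongr; linarith
    _ ≤ 2 * (q * ∑ i ∈ range L, q ^ i) + 1 := by linarith

theorem stmt_13_general (hα : -q ≤ α) (hαq : α < q) {L : ℕ} (hL : 1 ≤ L) {s : ℕ → K}
    (hs : ∀ ℓ ≤ L, s ℓ = 1 -
      ((q - α) / (2 * (∑ i ∈ Icc 1 L, q ^ i) + 1)) * ∑ i ∈ Icc (L - ℓ) (L - 1), q ^ i) :
    s 0 = 1 ∧
    (∀ ℓ, ℓ < L → s (ℓ + 1) < s ℓ) ∧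
    0 ≤ s L ∧
    (∀ ℓ, 1 ≤ ℓ → ℓ ≤ L → s (ℓ - 1) + q * (1 - s ℓ) = s L * (1 + q) - α) := by
  have hq : 0 < q := by linarith
  have s_eq : ∀ ℓ ≤ L, s ℓ = levelSeq q α L ℓ := fun ℓ hℓ ↦ by
    rw [hs ℓ hℓ, Icc_sub_one_right_eq_Ico_of_not_isMin (not_isMin_of_lt hL), levelSeq, levelScale]
  refine ⟨?_, fun ℓ hℓ ↦ ?_, ?_, fun ℓ one_le hℓ ↦ ?_⟩
  · rw [s_eq 0 L.zero_le, levelSeq_zero]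
  · rw [s_eq _ hℓ, s_eq _ hℓ.le]
    exact levelSeq_succ_lt hq hαq hℓ
  · rw [s_eq L le_rfl]
    exact levelSeq_self_nonneg hq.le hα L
  · obtain ⟨k, rfl⟩ := Nat.exists_eq_add_of_le' one_le
    rw [Nat.add_sub_cancel, s_eq k (by lia), s_eq _ hℓ, s_eq L le_rfl,
      levelSeq_add_mul_one_sub_levelSeq_succ q α hℓ,
      levelSeq_self_mul_one_add_sub α (two_mul_sum_Icc_pow_add_one_pos hq.le 1 L).ne']

end Order

end Field

theorem stmt_13
    (q α : ℝ) (hq : 0 < q) (hα0 : 0 ≤ α) (hαq : α < q)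
    (L : ℕ) (hL : 1 ≤ L)
    (s : ℕ → ℝ)
    (hs : ∀ ℓ ≤ L, s ℓ = 1 -
      ((q - α) / (2 * (∑ i ∈ Finset.Icc 1 L, q ^ i) + 1)) *
        ∑ i ∈ Finset.Icc (L - ℓ) (L - 1), q ^ i) :
    s 0 = 1 ∧
    (∀ ℓ, ℓ < L → s (ℓ + 1) < s ℓ) ∧
    0 ≤ s L ∧
    (∀ ℓ, 1 ≤ ℓ → ℓ ≤ L →
      s (ℓ - 1) + q * (1 - s ℓ) = s L * (1 + q) - α) :=
  stmt_13_general (by linarith) hαq hL hs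
end

section
/- Let p < 0 and q = |p|, let n ≥ 1, let L ≥ 1 be an integer, let α ≥ 0, and let 1 = s_0 ≥ s_1 ≥ … ≥ s_L ≥ 0 be reals satisfying s_{ℓ−1} + q·(1 − s_ℓ) = s_L·(1 + q) − α for every 1 ≤ ℓ ≤ L. Then ((1/n) · (n^{s_L} · (n^{−s_L})^p + ∑_{ℓ=1}^L (n^{s_{ℓ−1}} − n^{s_ℓ}) · (n^{s_ℓ − 1})^p))^{1/p} ≥ (1 + L · n^{−α})^{−1/q} · n^{(1 − s_L·(q+1))/q}. -/
open Real

/-!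
In the power sum `∑ mass * utility ^ p`, the lowest group contributes exactly `n ^ (s L * (1 + q))`.
After dropping the subtracted mass `n ^ s ℓ`, the `ℓ`-th remaining group contributes at most
`n ^ (s (ℓ - 1) + q * (1 - s ℓ))`, and the recursion makes this exponent `s L * (1 + q) - α`.
So each of the `L` groups costs at most a fraction `n ^ (-α)` of the lowest one, and the
decreasing map `y ↦ y ^ (1 / p)` turns the upper bound on the power sum into the lower bound on
welfare. Monotonicity of `s` keeps the power sum positive, where that map is decreasing.
-/

lemma rpow_mul_rpow_rpow {x : ℝ} (hx : 0 < x) (a b c : ℝ) :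
    x ^ a * (x ^ b) ^ c = x ^ (a + b * c) := by
  rw [← rpow_mul hx.le, ← rpow_add hx]

lemma rpow_sub_rpow_mul_rpow_rpow_le {x : ℝ} (hx : 0 < x) (a b c d : ℝ) :
    (x ^ a - x ^ b) * (x ^ c) ^ d ≤ x ^ (a + c * d) :=
  calc (x ^ a - x ^ b) * (x ^ c) ^ d
      ≤ x ^ a * (x ^ c) ^ d := by
        gcongr
        exact sub_le_self _ (by positivity)
    _ = x ^ (a + c * d) := rpow_mul_rpow_rpow hx a c d

lemma rpow_mul_rpow_le_rpow_of_le_mul_rpow {x y C e r : ℝ} (hx : 0 ≤ x) (hy : 0 < y)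
    (hr : r ≤ 0) (h : y ≤ C * x ^ e) : C ^ r * x ^ (e * r) ≤ y ^ r := by
  have hC : 0 < C := pos_of_mul_pos_left (hy.trans_le h) (rpow_nonneg hx e)
  calc C ^ r * x ^ (e * r)
      = (C * x ^ e) ^ r := by rw [mul_rpow hC.le (rpow_nonneg hx e), rpow_mul hx]
    _ ≤ y ^ r := rpow_le_rpow_of_nonpos hy h hr

/-- The sum of the `p`-th powers of the utilities in the profile with thresholds `s 0, …, s L` at
scale `x`: mass `x ^ s L` has utility `x ^ (-s L)`, and mass `x ^ s (ℓ - 1) - x ^ s ℓ` has utility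
`x ^ (s ℓ - 1)` for `1 ≤ ℓ ≤ L`. The sum is not divided by the total mass `x ^ s 0`. -/
noncomputable def profilePowerSum (x p : ℝ) (L : ℕ) (s : ℕ → ℝ) : ℝ :=
  x ^ s L * (x ^ (-s L)) ^ p +
    ∑ ℓ ∈ Finset.Icc 1 L, (x ^ s (ℓ - 1) - x ^ s ℓ) * (x ^ (s ℓ - 1)) ^ p

section profilePowerSum

variable {x : ℝ} {L : ℕ} {s : ℕ → ℝ}

lemma profilePowerSum_pos (hx : 1 ≤ x) (p : ℝ) (hs_mono : ∀ ℓ, ℓ < L → s (ℓ + 1) ≤ s ℓ) :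
    0 < profilePowerSum x p L s := by
  have : 0 < x := one_pos.trans_le hx
  refine add_pos_of_pos_of_nonneg (by positivity) (Finset.sum_nonneg fun ℓ hℓ ↦ ?_)
  obtain ⟨hℓ_pos, hℓ_le⟩ := Finset.mem_Icc.mp hℓ
  have hs : s ℓ ≤ s (ℓ - 1) := by
    simpa only [Nat.sub_add_cancel hℓ_pos] using hs_mono (ℓ - 1) (by omega)
  have hmass : 0 ≤ x ^ s (ℓ - 1) - x ^ s ℓ :=
    sub_nonneg.mpr (rpow_le_rpow_of_exponent_le hx hs)
  positivity

lemma profilePowerSum_le {p α : ℝ} (hx : 1 ≤ x)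
    (hrec : ∀ ℓ, 1 ≤ ℓ → ℓ ≤ L → s (ℓ - 1) + (s ℓ - 1) * p ≤ s L * (1 - p) - α) :
    profilePowerSum x p L s ≤ (1 + L * x ^ (-α)) * x ^ (s L * (1 - p)) := by
  have hx0 : 0 < x := one_pos.trans_le hx
  have hlowest : x ^ s L * (x ^ (-s L)) ^ p = x ^ (s L * (1 - p)) := by
    rw [rpow_mul_rpow_rpow hx0]
    ring_nf
  have hgroup : ∀ ℓ ∈ Finset.Icc 1 L,
      (x ^ s (ℓ - 1) - x ^ s ℓ) * (x ^ (s ℓ - 1)) ^ p ≤ x ^ (s L * (1 - p) - α) := by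
    intro ℓ hℓ
    obtain ⟨hℓ_pos, hℓ_le⟩ := Finset.mem_Icc.mp hℓ
    exact (rpow_sub_rpow_mul_rpow_rpow_le hx0 _ _ _ _).trans
      (rpow_le_rpow_of_exponent_le hx (hrec ℓ hℓ_pos hℓ_le))
  have hsum := Finset.sum_le_card_nsmul _ _ _ hgroup
  rw [Nat.card_Icc, Nat.add_sub_cancel, nsmul_eq_mul] at hsum
  calc profilePowerSum x p L s
      ≤ x ^ (s L * (1 - p)) + L * x ^ (s L * (1 - p) - α) := add_le_add hlowest.le hsum
    _ = (1 + L * x ^ (-α)) * x ^ (s L * (1 - p)) := by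
        rw [sub_eq_add_neg _ α, rpow_add hx0]
        ring

end profilePowerSum

theorem stmt_15_general
    {p q : ℝ} (hp : p < 0) (hq : q = |p|) {x : ℝ} (hx : 1 ≤ x) {L : ℕ} {α : ℝ} {s : ℕ → ℝ}
    (hs_mono : ∀ ℓ, ℓ < L → s (ℓ + 1) ≤ s ℓ)
    (hrec : ∀ ℓ, 1 ≤ ℓ → ℓ ≤ L → s (ℓ - 1) + q * (1 - s ℓ) ≤ s L * (1 + q) - α) :
    (1 + L * x ^ (-α)) ^ (-(1 / q)) * x ^ ((1 - s L * (q + 1)) / q) ≤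
      (1 / x * profilePowerSum x p L s) ^ (1 / p) := by
  obtain rfl : q = -p := hq.trans (abs_of_neg hp)
  have hx0 : 0 < x := one_pos.trans_le hx
  have hsum_le : profilePowerSum x p L s ≤ (1 + L * x ^ (-α)) * x ^ (s L * (1 - p)) :=
    profilePowerSum_le hx fun ℓ hℓ_pos hℓ_le ↦ by linarith [hrec ℓ hℓ_pos hℓ_le]
  have hmean_pos : 0 < 1 / x * profilePowerSum x p L s :=
    mul_pos (by positivity) (profilePowerSum_pos hx p hs_mono)
  have hmean_le : 1 / x * profilePowerSum x p L s ≤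
      (1 + L * x ^ (-α)) * x ^ (s L * (1 - p) - 1) := by
    rw [rpow_sub_one hx0.ne', one_div_mul_eq_div, ← mul_div_assoc]
    gcongr
  convert rpow_mul_rpow_le_rpow_of_le_mul_rpow hx0.le hmean_pos
    (one_div_nonpos.mpr hp.le) hmean_le using 3
  · rw [one_div_neg_eq_neg_one_div, neg_neg]
  · field_simp
    ring

theorem stmt_15
    (p q : ℝ) (hp : p < 0) (hq : q = |p|)
    (n : ℕ) (hn : 1 ≤ n)
    (L : ℕ) (hL : 1 ≤ L)
    (α : ℝ) (hα : 0 ≤ α)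
    (s : ℕ → ℝ)
    (hs0 : s 0 = 1)
    (hs_mono : ∀ ℓ, ℓ < L → s (ℓ + 1) ≤ s ℓ)
    (hsL : 0 ≤ s L)
    (hrec : ∀ ℓ, 1 ≤ ℓ → ℓ ≤ L →
      s (ℓ - 1) + q * (1 - s ℓ) = s L * (1 + q) - α) :
    ((1 / (n : ℝ)) * ((n : ℝ) ^ (s L) * ((n : ℝ) ^ (-(s L))) ^ p +
        ∑ ℓ ∈ Finset.Icc 1 L,
          ((n : ℝ) ^ (s (ℓ - 1)) - (n : ℝ) ^ (s ℓ)) *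
            ((n : ℝ) ^ (s ℓ - 1)) ^ p)) ^ (1 / p) ≥
      (1 + (L : ℝ) * (n : ℝ) ^ (-α)) ^ (-(1 / q)) *
        (n : ℝ) ^ ((1 - s L * (q + 1)) / q) :=
  stmt_15_general hp hq (Nat.one_le_cast.mpr hn) hs_mono
    fun ℓ hℓ_pos hℓ_le ↦ (hrec ℓ hℓ_pos hℓ_le).le
end
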